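/- arXiv:2309.14748 — 3 statements merged into one kernel-verified Lean document; each statement's English description precedes it below -/
import Mathlib

section
/- Let b ≥ 2 be an integer and p, q primes with p > b^q. Suppose k ∈ {0,1,...,q-1} and p ≡ r (mod q(q-1)) for some r coprime to q(q-1) with b^r ≡ k·r + b (mod q). Then |frac(b^{pq}/(pq)) − k/q| < 1/q, where frac(b^{pq}/(pq)) = (b^{pq} mod pq)/(pq). -/
/-!
Fermat's little theorem gives `b ^ p ≡ b [MOD p]` and `b ^ q ≡ b [MOD q]`. By the latter, `b ^ n`
modulo `q` depends only on `n` modulo `q - 1` when `n ≠ 0`, so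
`b ^ p ≡ b ^ r ≡ k * r + b ≡ k * p + b [MOD q]`. Hence `b ^ (p * q)` is congruent to `k * p + b ^ q`
modulo both `p` and `q`. As `k < q` and `b ^ q < p`, that number is smaller than `p * q`, so it is
the residue, and its quotient by `p * q` exceeds `k / q` by `(b ^ q / p) / q`.
-/

theorem pow_eq_pow_of_pow_eq_self {M : Type*} [Monoid M] {x : M} {q m n : ℕ} (hx : x ^ q = x)
    (hm : m ≠ 0) (hn : n ≠ 0) (hmn : m ≡ n [MOD q - 1]) : x ^ m = x ^ n := by
  have hper : Function.Periodic (fun i ↦ x ^ (i + 1)) (q - 1) := by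
    intro i
    obtain _ | d := q
    · rfl
    · simp only [Nat.add_sub_cancel, add_assoc, pow_add x i, hx, pow_one]
  obtain ⟨m, rfl⟩ := Nat.exists_eq_succ_of_ne_zero hm
  obtain ⟨n, rfl⟩ := Nat.exists_eq_succ_of_ne_zero hn
  have hmod : m % (q - 1) = n % (q - 1) := Nat.ModEq.add_right_cancel' 1 hmn
  calc
    x ^ (m + 1) = x ^ (m % (q - 1) + 1) := (hper.map_mod_nat m).symm
    _ = x ^ (n % (q - 1) + 1) := by rw [hmod]
    _ = x ^ (n + 1) := hper.map_mod_nat n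

theorem pow_modEq_pow_of_pow_modEq_self {b N q m n : ℕ} (hb : b ^ q ≡ b [MOD N])
    (hm : m ≠ 0) (hn : n ≠ 0) (hmn : m ≡ n [MOD q - 1]) : b ^ m ≡ b ^ n [MOD N] := by
  rw [← ZMod.natCast_eq_natCast_iff] at hb ⊢
  push_cast at hb ⊢
  exact pow_eq_pow_of_pow_eq_self hb hm hn hmn

theorem pow_mul_mod_mul_eq {b p q k : ℕ} (hpq : p.Coprime q) (hp : b ^ p ≡ b [MOD p])
    (hq : b ^ q ≡ b [MOD q]) (hk : k < q) (hlt : b ^ q < p) (h : b ^ p ≡ k * p + b [MOD q]) :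
    b ^ (p * q) % (p * q) = k * p + b ^ q := by
  have hmodp : b ^ (p * q) ≡ k * p + b ^ q [MOD p] :=
    calc
      b ^ (p * q) = (b ^ p) ^ q := pow_mul b p q
      _ ≡ b ^ q [MOD p] := hp.pow q
      _ ≡ k * p + b ^ q [MOD p] := by simp [Nat.ModEq]
  have hmodq : b ^ (p * q) ≡ k * p + b ^ q [MOD q] :=
    calc
      b ^ (p * q) = (b ^ q) ^ p := pow_mul' b p q
      _ ≡ b ^ p [MOD q] := hq.pow p
      _ ≡ k * p + b [MOD q] := h
      _ ≡ k * p + b ^ q [MOD q] := hq.symm.add_left _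
  have hsmall : k * p + b ^ q < p * q :=
    calc
      k * p + b ^ q < k * p + p := Nat.add_lt_add_left hlt _
      _ = p * (k + 1) := by ring
      _ ≤ p * q := Nat.mul_le_mul_left p hk
  exact Nat.mod_eq_of_modEq ((Nat.modEq_and_modEq_iff_modEq_mul hpq).1 ⟨hmodp, hmodq⟩) hsmall

theorem abs_mul_add_div_mul_sub_div_lt {K : Type*} [Field K] [LinearOrder K]
    [IsStrictOrderedRing K] {k p q c : K} (hq : 0 < q) (hc : 0 ≤ c) (hcp : c < p) :
    |(k * p + c) / (p * q) - k / q| < 1 / q := by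
  have hp : 0 < p := hc.trans_lt hcp
  have hdiff : (k * p + c) / (p * q) - k / q = c / p / q := by
    field_simp
    ring
  rw [hdiff, abs_of_nonneg (by positivity)]
  exact div_lt_div_of_pos_right ((div_lt_one hp).2 hcp) hq

theorem stmt_0_general (b p q : ℕ) (hp : b ^ p ≡ b [MOD p]) (hq : b ^ q ≡ b [MOD q])
    (hpb : b ^ q < p) (k r : ℕ) (hk : k < q)
    (hr : r.Coprime q) (hpr : p ≡ r [MOD q * (q - 1)]) (hbr : b ^ r ≡ k * r + b [MOD q]) :
    |((b ^ (p * q) % (p * q) : ℕ) : ℝ) / ((p * q : ℕ) : ℝ) - (k : ℝ) / q| < 1 / q := by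
  have hp0 : p ≠ 0 := Nat.ne_zero_of_lt hpb
  have hr0 : r ≠ 0 := by
    rintro rfl
    obtain rfl : q = 1 := (Nat.coprime_zero_left q).1 hr
    exact hp0 (Nat.modEq_zero_iff.1 hpr)
  have hprq : p ≡ r [MOD q] := hpr.of_mul_right _
  have hpq : p.Coprime q := hprq.gcd_eq.trans hr
  have hbp : b ^ p ≡ k * p + b [MOD q] :=
    calc
      b ^ p ≡ b ^ r [MOD q] := pow_modEq_pow_of_pow_modEq_self hq hp0 hr0 (hpr.of_mul_left q)
      _ ≡ k * r + b [MOD q] := hbr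
      _ ≡ k * p + b [MOD q] := (hprq.symm.mul_left k).add_right b
  rw [pow_mul_mod_mul_eq hpq hp hq hk hpb hbp]
  push_cast
  exact abs_mul_add_div_mul_sub_div_lt (mod_cast hk.pos) (by positivity) (mod_cast hpb)

theorem stmt_0 (b p q : ℕ) (hb : 2 ≤ b) (hp : p.Prime) (hq : q.Prime)
    (hpb : b ^ q < p) (k r : ℕ) (hk : k < q)
    (hr : r.Coprime (q * (q - 1)))
    (hpr : p ≡ r [MOD q * (q - 1)])
    (hbr : b ^ r ≡ k * r + b [MOD q]) :
    |((b ^ (p * q) % (p * q) : ℕ) : ℝ) / ((p * q : ℕ) : ℝ) - (k : ℝ) / q| < 1 / q := by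
  have fermat {n : ℕ} (hn : n.Prime) : b ^ n ≡ b [MOD n] :=
    Int.natCast_modEq_iff.1 (mod_cast Int.ModEq.pow_prime_eq_self hn b)
  exact stmt_0_general b p q (fermat hp) (fermat hq) hpb k r hk hr.coprime_mul_right_right hpr hbr
end

section
/- Let b ≥ 2 and A = {pq : p, q primes, p > b^q}, A_N = A ∩ [1,N]. Then |A_N| ~ N·log log log N / log N, in the sense that there are absolute positive constants c₁, c₂ and N₀ such that c₁·N·log log log N/log N ≤ |A_N| ≤ c₂·N·log log log N/log N for all N ≥ N₀. -/
/-!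
Sorting the products `p q` by the factor `q` gives `|A_N| ≤ ∑ π(N / q)`, over the primes
`q ≤ log N / log b`. For such small `q`, Chebyshev's bounds give `π(N / q) ≍ N / (q log N)`, and
Chebyshev's bounds with Abel summation give `∑_{q ≤ y} 1 / q ≍ log log y`. As rescaling `y = log N`
by a constant does not change `log log y` asymptotically, the sum is `≍ N log log log N / log N`.
For the lower bound take `q ≤ log N / (2 log b)`: then `b ^ q ≤ √N`, so every prime `p > √N` is
admissible, `p q` determines `(p, q)`, and discarding the primes `p ≤ √N` costs only
`O(√N log N)`.
-/

open Nat hiding log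
open Asymptotics Filter Finset MeasureTheory Real
open scoped Nat.Prime

theorem primeCounting_le_self (n : ℕ) : π n ≤ n := by
  rw [← primesLE_card_eq_primeCounting, primesLE_eq_filter_Ioc_zero]
  simpa only [Nat.card_Ioc, Nat.sub_zero] using card_filter_le (Ioc 0 n) Nat.Prime

theorem div_log_le_primeCounting {x : ℝ} (hx : 2 ≤ x) :
    x / (16 * log x) ≤ (π ⌊x⌋₊ : ℝ) := by
  set n := ⌊x⌋₊
  have hn : (2 : ℝ) ≤ n := mod_cast Nat.le_floor hx
  have hlog_n : 0 < log n := log_pos (by linarith)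
  have hlog_le : log n ≤ log x := log_le_log (by linarith) (floor_le (by linarith))
  have hx_lt : x < n + 1 := lt_floor_add_one x
  have hlog_succ : log (n + 1) ≤ 2 * log 2 + (n - 3) / 4 := by
    have tangent : log ((n + 1) / 2 ^ 2) ≤ (n + 1) / 2 ^ 2 - 1 :=
      log_le_sub_one_of_pos (by positivity)
    rw [log_div (by positivity) (by positivity), Real.log_pow] at tangent
    push_cast at tangent
    linarith
  calc x / (16 * log x) ≤ (n / 8) / log n := by
        rw [← div_div]
        have : x / 16 ≤ n / 8 := by linarith
        gcongr
    _ ≤ (n * log 2 - log (n + 1)) / log n := by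
        gcongr
        nlinarith [log_two_gt_d9]
    _ ≤ π n := Chebyshev.pi_ge n

theorem primeCounting_le_div_log {x : ℝ} (hx : 1 < x) :
    (π ⌊x⌋₊ : ℝ) ≤ 5 * x / log x := by
  have hlog : 0 < log x := log_pos hx
  have hlog_sqrt : log √x = log x / 2 := log_sqrt (by linarith)
  have sqrt_le : √x ≤ 2 * x / log x := by
    have : log √x ≤ √x - 1 := log_le_sub_one_of_pos (by positivity)
    rw [le_div_iff₀ hlog]
    nlinarith [mul_self_sqrt (show 0 ≤ x by linarith), sqrt_nonneg x]
  have log_four_le : log 4 ≤ 3 / 2 := by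
    rw [show (4 : ℝ) = 2 ^ 2 by norm_num, Real.log_pow]
    push_cast
    linarith [log_two_lt_d9]
  calc (π ⌊x⌋₊ : ℝ) ≤ log 4 * x / log √x + √x := Chebyshev.pi_le_log4_mul_div hx
    _ ≤ 3 / 2 * x / (log x / 2) + 2 * x / log x := by rw [hlog_sqrt]; gcongr
    _ = 5 * x / log x := by ring

theorem integrableOn_inv_sq_Icc {a : ℝ} (ha : 0 < a) (b : ℝ) :
    IntegrableOn (fun t : ℝ ↦ (t ^ 2)⁻¹) (Set.Icc a b) :=
  ContinuousOn.integrableOn_Icc <| ContinuousOn.inv₀ (by fun_prop) fun t ht ↦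
    pow_ne_zero 2 (ha.trans_le ht.1).ne'

theorem sum_Icc_ite_prime_eq_primeCounting (n : ℕ) :
    ∑ k ∈ Icc 0 n, (if k.Prime then (1 : ℝ) else 0) = π n := by
  simp [← primesLE_card_eq_primeCounting, primesLE_eq_filter_Icc_zero]

theorem intervalIntegrable_primeCounting_div_sq {a b : ℝ} (ha : 0 < a) (hab : a ≤ b) :
    IntervalIntegrable (fun t ↦ (π ⌊t⌋₊ : ℝ) / t ^ 2) volume a b := by
  rw [intervalIntegrable_iff_integrableOn_Icc_of_le hab]
  simpa only [sum_Icc_ite_prime_eq_primeCounting, div_eq_inv_mul] using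
    integrableOn_mul_sum_Icc (fun k ↦ if k.Prime then (1 : ℝ) else 0) ha.le
      (integrableOn_inv_sq_Icc ha b) (m := 0)

theorem sum_primesLE_inv_eq_add_integral {x : ℝ} (hx : 2 ≤ x) :
    ∑ p ∈ primesLE ⌊x⌋₊, (p : ℝ)⁻¹ = π ⌊x⌋₊ / x + ∫ t in 2..x, (π ⌊t⌋₊ : ℝ) / t ^ 2 := by
  calc ∑ p ∈ primesLE ⌊x⌋₊, (p : ℝ)⁻¹
      = ∑ k ∈ Icc 0 ⌊x⌋₊, (k : ℝ)⁻¹ * (if k.Prime then (1 : ℝ) else 0) := by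
        simp [primesLE_eq_filter_Icc_zero, sum_filter]
    _ = π ⌊x⌋₊ / x + ∫ t in 2..x, (π ⌊t⌋₊ : ℝ) / t ^ 2 := by
        rw [sum_mul_eq_sub_integral_mul₁ _ (f := fun t ↦ t⁻¹) (by simp [Nat.not_prime_zero])
          (by simp [Nat.not_prime_one]), ← intervalIntegral.integral_of_le hx]
        · simp_rw [sum_Icc_ite_prime_eq_primeCounting, deriv_inv]
          simp [div_eq_inv_mul]
        · rintro t ⟨ht, -⟩
          exact differentiableAt_inv (by linarith)
        · rw [deriv_inv']
          exact (integrableOn_inv_sq_Icc two_pos x).neg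

theorem intervalIntegrable_inv_div_log {a b : ℝ} (ha : 1 < a) (hb : 1 < b) :
    IntervalIntegrable (fun t ↦ t⁻¹ / log t) volume a b := by
  refine ContinuousOn.intervalIntegrable fun t ht ↦ ContinuousAt.continuousWithinAt ?_
  have one_lt : 1 < t := (lt_min ha hb).trans_le ht.1
  have ne_zero : t ≠ 0 := by linarith
  exact (continuousAt_inv₀ ne_zero).div (continuousAt_log ne_zero) (log_pos one_lt).ne'

theorem log_log_two_nonpos : log (log 2) ≤ 0 :=
  log_nonpos (log_nonneg one_le_two) (by linarith [log_two_lt_d9])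

theorem log_log_div_le_sum_primesLE_inv {x : ℝ} (hx : 2 ≤ x) :
    log (log x) / 16 ≤ ∑ p ∈ primesLE ⌊x⌋₊, (p : ℝ)⁻¹ := by
  have integral_le : ∫ t in 2..x, 16⁻¹ * (t⁻¹ / log t) ≤ ∫ t in 2..x, (π ⌊t⌋₊ : ℝ) / t ^ 2 := by
    refine intervalIntegral.integral_mono_on hx
      ((intervalIntegrable_inv_div_log one_lt_two (by linarith)).const_mul _)
      (intervalIntegrable_primeCounting_div_sq two_pos hx) fun t ⟨ht, _⟩ ↦ ?_
    calc 16⁻¹ * (t⁻¹ / log t) = t / (16 * log t) / t ^ 2 := by field_simp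
      _ ≤ π ⌊t⌋₊ / t ^ 2 := by gcongr; exact div_log_le_primeCounting ht
  rw [intervalIntegral.integral_const_mul, integral_inv_div_log one_lt_two (by linarith)]
    at integral_le
  rw [sum_primesLE_inv_eq_add_integral hx]
  have boundary_nonneg : 0 ≤ π ⌊x⌋₊ / x := by positivity
  linarith [log_log_two_nonpos]

theorem sum_primesLE_inv_le {x : ℝ} (hx : 2 ≤ x) :
    ∑ p ∈ primesLE ⌊x⌋₊, (p : ℝ)⁻¹ ≤ 5 * log (log x) + 10 := by
  have le_integral : ∫ t in 2..x, (π ⌊t⌋₊ : ℝ) / t ^ 2 ≤ ∫ t in 2..x, 5 * (t⁻¹ / log t) := by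
    refine intervalIntegral.integral_mono_on hx
      (intervalIntegrable_primeCounting_div_sq two_pos hx)
      ((intervalIntegrable_inv_div_log one_lt_two (by linarith)).const_mul _) fun t ⟨ht, _⟩ ↦ ?_
    calc π ⌊t⌋₊ / t ^ 2 ≤ 5 * t / log t / t ^ 2 := by
          gcongr; exact primeCounting_le_div_log (by linarith)
      _ = 5 * (t⁻¹ / log t) := by field_simp
  rw [intervalIntegral.integral_const_mul, integral_inv_div_log one_lt_two (by linarith)]
    at le_integral
  have boundary_le : π ⌊x⌋₊ / x ≤ 1 := by
    rw [div_le_one (by linarith)]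
    calc (π ⌊x⌋₊ : ℝ) ≤ ⌊x⌋₊ := mod_cast primeCounting_le_self _
      _ ≤ x := floor_le (by linarith)
  have le_log_log_two : -1 ≤ log (log 2) := by
    have inv_le : (log 2)⁻¹ ≤ 2 := inv_le_of_inv_le₀ two_pos (by linarith [log_two_gt_d9])
    linarith [one_sub_inv_le_log_of_pos (log_pos one_lt_two)]
  rw [sum_primesLE_inv_eq_add_integral hx]
  linarith

theorem log_log_const_mul_isEquivalent {a : ℝ} (ha : 0 < a) :
    (fun x ↦ log (log (a * x))) ~[atTop] fun x ↦ log (log x) := by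
  refine IsEquivalent.log ?_ tendsto_log_atTop
  refine (isLittleO_const_log_atTop (c := log a)).add_isEquivalent .refl |>.congr_left ?_
  filter_upwards [eventually_gt_atTop 0] with x hx
  exact (log_mul ha.ne' hx.ne').symm

theorem eventually_sum_primesLE_inv_const_mul_bounds {a : ℝ} (ha : 0 < a) :
    ∀ᶠ x in atTop, log (log x) / 32 ≤ ∑ p ∈ primesLE ⌊a * x⌋₊, (p : ℝ)⁻¹ ∧
      ∑ p ∈ primesLE ⌊a * x⌋₊, (p : ℝ)⁻¹ ≤ 10 * log (log x) := by
  have log_log_large := (tendsto_log_atTop.comp tendsto_log_atTop).eventually_ge_atTop 4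
  filter_upwards [(log_log_const_mul_isEquivalent ha).isLittleO.bound (c := 1 / 2) (by norm_num),
    log_log_large, (tendsto_id.const_mul_atTop ha).eventually_ge_atTop 2] with x close large hax
  rw [Function.comp_apply] at large
  rw [id] at hax
  rw [Pi.sub_apply, norm_eq_abs, norm_eq_abs, abs_of_nonneg (a := log (log x)) (by linarith),
    abs_le] at close
  constructor
  · linarith [log_log_div_le_sum_primesLE_inv hax]
  · linarith [sum_primesLE_inv_le hax]

theorem primeCounting_div_bounds {x q : ℝ} (hx : 4 ≤ x) (hq : 1 ≤ q) (hqx : q ≤ √x) :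
    x / (16 * log x) * q⁻¹ ≤ π ⌊x / q⌋₊ ∧ (π ⌊x / q⌋₊ : ℝ) ≤ 10 * x / log x * q⁻¹ := by
  have q_pos : 0 < q := by linarith
  have two_le_sqrt : 2 ≤ √x := le_sqrt_of_sq_le (by linarith)
  have sqrt_le_div : √x ≤ x / q := by
    rw [le_div_iff₀ q_pos]
    calc √x * q ≤ √x * √x := by gcongr
      _ = x := mul_self_sqrt (by linarith)
  have log_le : log (x / q) ≤ log x :=
    log_le_log (by linarith) (div_le_self (by linarith) hq)
  have half_log_le : log x / 2 ≤ log (x / q) := by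
    rw [← log_sqrt (by linarith)]
    exact log_le_log (by linarith) sqrt_le_div
  have log_x_pos : 0 < log x := log_pos (by linarith)
  have log_div_pos : 0 < log (x / q) := by linarith
  constructor
  · calc x / (16 * log x) * q⁻¹ = x / q / (16 * log x) := by field_simp
      _ ≤ x / q / (16 * log (x / q)) := by gcongr
      _ ≤ π ⌊x / q⌋₊ := div_log_le_primeCounting (by linarith)
  · calc (π ⌊x / q⌋₊ : ℝ) ≤ 5 * (x / q) / log (x / q) := primeCounting_le_div_log (by linarith)
      _ ≤ 5 * (x / q) / (log x / 2) := by gcongr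
      _ = 10 * x / log x * q⁻¹ := by field_simp; norm_num

theorem sum_primeCounting_div_bounds {N m : ℕ} (hN : 4 ≤ N) (hm : (m : ℝ) ≤ √N) :
    N / (16 * log N) * ∑ q ∈ primesLE m, (q : ℝ)⁻¹ ≤ ∑ q ∈ primesLE m, (π (N / q) : ℝ) ∧
      ∑ q ∈ primesLE m, (π (N / q) : ℝ) ≤ 10 * N / log N * ∑ q ∈ primesLE m, (q : ℝ)⁻¹ := by
  have term_bounds {q : ℕ} (hq : q ∈ primesLE m) :
      N / (16 * log N) * (q : ℝ)⁻¹ ≤ π (N / q) ∧ (π (N / q) : ℝ) ≤ 10 * N / log N * (q : ℝ)⁻¹ := by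
    obtain ⟨q_le, hq⟩ := mem_primesLE.1 hq
    have q_le_sqrt : (q : ℝ) ≤ √N := (Nat.cast_le.2 q_le).trans hm
    simpa only [Nat.floor_div_natCast, Nat.floor_natCast] using
      primeCounting_div_bounds (mod_cast hN) (mod_cast hq.one_le) q_le_sqrt
  simp only [mul_sum]
  exact ⟨sum_le_sum fun q hq ↦ (term_bounds hq).1, sum_le_sum fun q hq ↦ (term_bounds hq).2⟩

theorem eventually_const_mul_log_pow_le_sqrt (c : ℝ) (k : ℕ) :
    ∀ᶠ x : ℝ in atTop, c * log x ^ k ≤ √x := by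
  have isLittleO : (fun x ↦ c * log x ^ k) =o[atTop] fun x : ℝ ↦ √x := by
    simpa only [rpow_natCast, sqrt_eq_rpow] using
      (isLittleO_log_rpow_rpow_atTop (k : ℝ) one_half_pos).const_mul_left c
  filter_upwards [isLittleO.bound one_pos] with x hx
  rw [one_mul, norm_of_nonneg (sqrt_nonneg x)] at hx
  exact (le_norm_self _).trans hx

theorem eventually_floor_const_mul_log_le_sqrt {a : ℝ} (ha : 0 ≤ a) :
    ∀ᶠ N : ℕ in atTop, (⌊a * log N⌋₊ : ℝ) ≤ √N := by
  filter_upwards [tendsto_natCast_atTop_atTop.eventually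
    (eventually_const_mul_log_pow_le_sqrt a 1)] with N hN
  rw [pow_one] at hN
  exact (floor_le (by positivity)).trans hN

theorem eventually_sum_primeCounting_div_bounds {a : ℝ} (ha : 0 < a) :
    ∀ᶠ N : ℕ in atTop,
      N * log (log (log N)) / log N / 512 ≤ ∑ q ∈ primesLE ⌊a * log N⌋₊, (π (N / q) : ℝ) ∧
      ∑ q ∈ primesLE ⌊a * log N⌋₊, (π (N / q) : ℝ) ≤ 100 * (N * log (log (log N)) / log N) := by
  have log_tendsto : Tendsto (fun N : ℕ ↦ log N) atTop atTop :=
    tendsto_log_atTop.comp tendsto_natCast_atTop_atTop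
  filter_upwards [eventually_ge_atTop 4,  eventually_floor_const_mul_log_le_sqrt ha.le,
    log_tendsto.eventually (eventually_sum_primesLE_inv_const_mul_bounds ha)]
    with N hN floor_le_sqrt ⟨le_sum, sum_le⟩
  have log_pos : 0 < log N := log_pos (by exact_mod_cast (by omega : 1 < N))
  obtain ⟨lower, upper⟩ := sum_primeCounting_div_bounds hN floor_le_sqrt
  constructor
  · calc N * log (log (log N)) / log N / 512 = N / (16 * log N) * (log (log (log N)) / 32) := by
          field_simp; ring
      _ ≤ N / (16 * log N) * ∑ q ∈ primesLE ⌊a * log N⌋₊, (q : ℝ)⁻¹ := by gcongr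
      _ ≤ _ := lower
  · calc _ ≤ _ := upper
      _ ≤ 10 * N / log N * (10 * log (log (log N))) := by gcongr
      _ = _ := by ring

/-- The set `A_N` of elements up to `N` of `A = {p q : p, q prime, p > b ^ q}`, for a real base `b`.
-/
def unbalancedSemiprimesLE (b : ℝ) (N : ℕ) : Set ℕ :=
  {n | 1 ≤ n ∧ n ≤ N ∧ ∃ p q : ℕ, p.Prime ∧ q.Prime ∧ b ^ q < p ∧ n = p * q}

theorem unbalancedSemiprimesLE_finite (b : ℝ) (N : ℕ) : (unbalancedSemiprimesLE b N).Finite :=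
  (Set.finite_Iic N).subset fun _ hn ↦ hn.2.1

theorem card_unbalancedSemiprimesLE_le {b : ℝ} (hb : 1 < b) (N : ℕ) :
    Nat.card (unbalancedSemiprimesLE b N) ≤ ∑ q ∈ primesLE ⌊(log b)⁻¹ * log N⌋₊, π (N / q) := by
  let pairs := (primesLE ⌊(log b)⁻¹ * log N⌋₊).sigma fun q ↦ primesLE (N / q)
  have subset_image : unbalancedSemiprimesLE b N ⊆ pairs.image fun t ↦ t.2 * t.1 := by
    rintro _ ⟨-, mul_le, p, q, hp, hq, pow_lt, rfl⟩
    have log_le : q * log b ≤ log N := by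
      rw [← Real.log_pow]
      refine log_le_log (by positivity) (pow_lt.le.trans ?_)
      exact_mod_cast (Nat.le_mul_of_pos_right p hq.pos).trans mul_le
    have q_le : q ≤ ⌊(log b)⁻¹ * log N⌋₊ :=
      Nat.le_floor ((le_inv_mul_iff₀' (log_pos hb)).2 log_le)
    have p_le : p ≤ N / q := (Nat.le_div_iff_mul_le hq.pos).2 mul_le
    simp only [coe_image, Set.mem_image, mem_coe]
    exact ⟨⟨q, p⟩, mem_sigma.2 ⟨mem_primesLE.2 ⟨q_le, hq⟩, mem_primesLE.2 ⟨p_le, hp⟩⟩, rfl⟩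
  calc Nat.card (unbalancedSemiprimesLE b N) ≤ #(pairs.image fun t ↦ t.2 * t.1) := by
        rw [Nat.card_coe_set_eq, ← Set.ncard_coe_finset]
        exact Set.ncard_le_ncard subset_image
    _ ≤ #pairs := card_image_le
    _ = ∑ q ∈ primesLE ⌊(log b)⁻¹ * log N⌋₊, π (N / q) := by
        simp only [pairs, Finset.card_sigma, primesLE_card_eq_primeCounting]

theorem eq_and_eq_of_prime_mul_eq_prime_mul {p q p' q' : ℕ} (hq : q.Prime) (hp' : p'.Prime)
    (hq' : q'.Prime) (hne : q ≠ p') (heq : p * q = p' * q') : q = q' ∧ p = p' := by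
  have q_dvd : q ∣ p' * q' := heq ▸ dvd_mul_left q p
  have q_eq : q = q' := by
    rcases hq.dvd_mul.1 q_dvd with h | h
    · exact absurd ((prime_dvd_prime_iff_eq hq hp').1 h) hne
    · exact (prime_dvd_prime_iff_eq hq hq').1 h
  subst q_eq
  exact ⟨rfl, Nat.eq_of_mul_eq_mul_right hq.pos heq⟩

theorem sum_card_large_primes_le_card_unbalancedSemiprimesLE {b z : ℝ} {m : ℕ} (hb : 1 ≤ b)
    (hm : m ≤ z) (hbm : b ^ m ≤ z) (N : ℕ) :
    ∑ q ∈ primesLE m, #{p ∈ primesLE (N / q) | z < ((p : ℕ) : ℝ)} ≤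
      Nat.card (unbalancedSemiprimesLE b N) := by
  have finite := unbalancedSemiprimesLE_finite b N
  rw [← Finset.card_sigma, Nat.card_coe_set_eq, Set.ncard_eq_toFinset_card _ finite]
  refine card_le_card_of_injOn (fun t ↦ t.2 * t.1) (fun ⟨q, p⟩ ht ↦ ?_)
    fun ⟨q, p⟩ ht ⟨q', p'⟩ ht' heq ↦ ?_
  · simp only [coe_sigma, Set.mem_sigma_iff, mem_coe, mem_filter, mem_primesLE] at ht
    obtain ⟨⟨q_le, hq⟩, ⟨p_le, hp⟩, z_lt⟩ := ht
    have pow_lt : b ^ q < p := ((pow_le_pow_right₀ hb q_le).trans hbm).trans_lt z_lt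
    exact finite.mem_toFinset.2 ⟨Nat.mul_pos hp.pos hq.pos,
      (Nat.le_div_iff_mul_le hq.pos).1 p_le, p, q, hp, hq, pow_lt, rfl⟩
  · simp only [coe_sigma, Set.mem_sigma_iff, mem_coe, mem_filter, mem_primesLE] at ht ht'
    obtain ⟨⟨q_le, hq⟩, -⟩ := ht
    obtain ⟨⟨-, hq'⟩, ⟨-, hp'⟩, z_lt⟩ := ht'
    have q_ne : q ≠ p' := by
      rintro rfl
      exact absurd (hm.trans_lt z_lt) (by exact_mod_cast q_le.not_gt)
    obtain ⟨rfl, rfl⟩ := eq_and_eq_of_prime_mul_eq_prime_mul hq hp' hq' q_ne heq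
    rfl

theorem primeCounting_le_card_large_primes_add (n : ℕ) (z : ℝ) :
    π n ≤ #{p ∈ primesLE n | z < ((p : ℕ) : ℝ)} + ⌊z⌋₊ := by
  have small_le : #{p ∈ primesLE n | ¬ z < ((p : ℕ) : ℝ)} ≤ ⌊z⌋₊ := by
    calc #{p ∈ primesLE n | ¬ z < ((p : ℕ) : ℝ)} ≤ #(primesLE ⌊z⌋₊) := by
          refine card_le_card fun p hp ↦ ?_
          obtain ⟨hp, p_le⟩ := mem_filter.1 hp
          exact mem_primesLE.2 ⟨Nat.le_floor (not_lt.1 p_le), prime_of_mem_primesLE hp⟩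
      _ ≤ ⌊z⌋₊ := by rw [primesLE_card_eq_primeCounting]; exact primeCounting_le_self _
  rw [← primesLE_card_eq_primeCounting, ← card_filter_add_card_filter_not (fun p : ℕ ↦ z < p)]
  gcongr

theorem sum_primeCounting_div_le_card_add {b z : ℝ} {m : ℕ} (hb : 1 ≤ b)
    (hm : m ≤ z) (hbm : b ^ m ≤ z) (N : ℕ) :
    ∑ q ∈ primesLE m, π (N / q) ≤ Nat.card (unbalancedSemiprimesLE b N) + m * ⌊z⌋₊ := by
  calc ∑ q ∈ primesLE m, π (N / q)
      ≤ ∑ q ∈ primesLE m, (#{p ∈ primesLE (N / q) | z < ((p : ℕ) : ℝ)} + ⌊z⌋₊) :=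
        sum_le_sum fun q _ ↦ primeCounting_le_card_large_primes_add _ z
    _ = ∑ q ∈ primesLE m, #{p ∈ primesLE (N / q) | z < ((p : ℕ) : ℝ)} + π m * ⌊z⌋₊ := by
        rw [sum_add_distrib, sum_const, primesLE_card_eq_primeCounting, smul_eq_mul]
    _ ≤ Nat.card (unbalancedSemiprimesLE b N) + m * ⌊z⌋₊ := by
        gcongr
        · exact sum_card_large_primes_le_card_unbalancedSemiprimesLE hb hm hbm N
        · exact primeCounting_le_self m

theorem eventually_const_mul_log_mul_sqrt_le (c : ℝ) :
    ∀ᶠ x : ℝ in atTop, c * log x * √x ≤ x * log (log (log x)) / log x := by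
  have log_log_log_large :=
    (tendsto_log_atTop.comp (tendsto_log_atTop.comp tendsto_log_atTop)).eventually_ge_atTop 1
  filter_upwards [eventually_gt_atTop 1, log_log_log_large,
    eventually_const_mul_log_pow_le_sqrt c 2] with x one_lt large log_sq_le
  have log_pos : 0 < log x := log_pos one_lt
  rw [le_div_iff₀ log_pos]
  calc c * log x * √x * log x = c * log x ^ 2 * √x := by ring
    _ ≤ √x * √x := by gcongr
    _ = x * 1 := by rw [mul_self_sqrt (by linarith), mul_one]
    _ ≤ x * log (log (log x)) := by gcongr; exact large

theorem pow_le_sqrt_of_mul_log_le {b x : ℝ} {m : ℕ} (hb : 0 < b) (hx : 0 < x)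
    (hm : 2 * m * log b ≤ log x) : b ^ m ≤ √x := by
  refine le_sqrt_of_sq_le ?_
  rw [← log_le_log_iff (by positivity) hx, Real.log_pow, Real.log_pow]
  push_cast
  linarith

theorem eventually_card_unbalancedSemiprimesLE_le {b : ℝ} (hb : 1 < b) :
    ∀ᶠ N : ℕ in atTop, (Nat.card (unbalancedSemiprimesLE b N) : ℝ) ≤
      100 * (N * log (log (log N)) / log N) := by
  filter_upwards [eventually_sum_primeCounting_div_bounds (inv_pos.2 (log_pos hb))]
    with N ⟨_, sum_le⟩
  refine le_trans ?_ sum_le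
  exact_mod_cast card_unbalancedSemiprimesLE_le hb N

theorem eventually_le_card_unbalancedSemiprimesLE {b : ℝ} (hb : 1 < b) :
    ∀ᶠ N : ℕ in atTop, N * log (log (log N)) / log N / 1024 ≤
      (Nat.card (unbalancedSemiprimesLE b N) : ℝ) := by
  have log_b_pos : 0 < log b := log_pos hb
  set a := (2 * log b)⁻¹ with a_def
  have a_pos : 0 < a := by positivity
  filter_upwards [eventually_ge_atTop 1, eventually_sum_primeCounting_div_bounds a_pos,
    eventually_floor_const_mul_log_le_sqrt a_pos.le,
    tendsto_natCast_atTop_atTop.eventually (eventually_const_mul_log_mul_sqrt_le (1024 * a))]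
    with N one_le ⟨le_sum, _⟩ floor_le_sqrt remainder_le
  have floor_log_le : (⌊a * log N⌋₊ : ℝ) ≤ a * log N := floor_le (by positivity)
  have pow_le : b ^ ⌊a * log N⌋₊ ≤ √N := by
    refine pow_le_sqrt_of_mul_log_le (by linarith) (by positivity) ?_
    rw [a_def, le_inv_mul_iff₀ (by positivity)] at floor_log_le
    linarith
  have sum_le : ∑ q ∈ primesLE ⌊a * log N⌋₊, (π (N / q) : ℝ) ≤
      Nat.card (unbalancedSemiprimesLE b N) + ⌊a * log N⌋₊ * ⌊√N⌋₊ :=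
    mod_cast sum_primeCounting_div_le_card_add hb.le floor_le_sqrt pow_le N
  have floor_mul_le : (⌊a * log N⌋₊ * ⌊√N⌋₊ : ℝ) ≤ a * log N * √N := by
    gcongr
    exact floor_le (sqrt_nonneg _)
  linarith

theorem stmt_16_general :
    ∃ c₁ c₂ : ℝ, 0 < c₁ ∧ 0 < c₂ ∧ ∀ b : ℝ, 1 < b → ∃ N₀ : ℕ, ∀ N : ℕ, N₀ ≤ N →
      c₁ * N * log (log (log N)) / log N ≤ (Nat.card (unbalancedSemiprimesLE b N) : ℝ) ∧
        (Nat.card (unbalancedSemiprimesLE b N) : ℝ) ≤ c₂ * N * log (log (log N)) / log N := by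
  refine ⟨1 / 1024, 100, by norm_num, by norm_num, fun b hb ↦ eventually_atTop.1 ?_⟩
  filter_upwards [eventually_le_card_unbalancedSemiprimesLE hb,
    eventually_card_unbalancedSemiprimesLE_le hb] with N lower upper
  constructor
  · calc _ = N * log (log (log N)) / log N / 1024 := by ring
      _ ≤ _ := lower
  · calc _ ≤ _ := upper
      _ = _ := by ring

theorem stmt_16 (b : ℕ) (hb : 2 ≤ b) :
    ∃ c₁ c₂ : ℝ, 0 < c₁ ∧ 0 < c₂ ∧ ∃ N₀ : ℕ, ∀ N : ℕ, N₀ ≤ N →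
      c₁ * N * Real.log (Real.log (Real.log N)) / Real.log N ≤
          (Nat.card {n : ℕ | 1 ≤ n ∧ n ≤ N ∧
            ∃ p q : ℕ, p.Prime ∧ q.Prime ∧ b ^ q < p ∧ n = p * q} : ℝ) ∧
        (Nat.card {n : ℕ | 1 ≤ n ∧ n ≤ N ∧
            ∃ p q : ℕ, p.Prime ∧ q.Prime ∧ b ^ q < p ∧ n = p * q} : ℝ) ≤
          c₂ * N * Real.log (Real.log (Real.log N)) / Real.log N := by
  obtain ⟨c₁, c₂, hc₁, hc₂, bounds⟩ := stmt_16_general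
  have bounds_b := bounds b (by exact_mod_cast hb)
  simp only [unbalancedSemiprimesLE] at bounds_b
  exact ⟨c₁, c₂, hc₁, hc₂, by exact_mod_cast bounds_b⟩
end

section
/- Let b ≥ 2 and define S_b(A) = {(b^n mod n)/n : n ∈ A} for A = {pq : p, q primes, p > b^q}, with A_N = A ∩ [1,N]. Then the star discrepancy of the finite sequence S_b(A_N) satisfies D*(S_b(A_N)) = O(1/log log log N) as N → ∞. -/
open scoped Classical in
/-- Star discrepancy of the finite sequence `(f n)ic indexed by `n ∈ A`. -/
noncomputable def starDiscOn (A : Finset ℕ) (f : ℕ → ℝ) : ℝ :=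
  ⨆ r : Set.Ioc (0 : ℝ) 1,
    |((A.filter fun n => f n ≤ (r : ℝ)).card : ℝ) / A.card - (r : ℝ)|

open scoped Classical in
/-- `A_N` : products `pq` of primes with `p > b^q`, below `N`. -/
noncomputable def setAN (b N : ℕ) : Finset ℕ :=
  (Finset.Icc 1 N).filter fun n =>
    ∃ p q : ℕ, p.Prime ∧ q.Prime ∧ b ^ q < p ∧ n = p * q

/-!
Let `n = p * q` with `p > b ^ q`. By the Chinese remainder theorem `b ^ n mod n = b ^ q + p * k`
for a residue `k` modulo `q`, so the term of the sequence is `k / q` up to `1 / q`, and everything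
reduces to the equidistribution of `k` over the residues modulo `q`.

As `k` depends on `p` only through `p` modulo `q` and modulo `q - 1`, the residues belonging to
distinct `q` are nearly orthogonal when averaged over all integers up to a bound, even when weighted
by a Selberg majorant of the primes. The Cauchy–Schwarz inequality over dyadic blocks of `q` then
bounds the sum of a test function of mean zero by `O(N / log N)`. The value `k = 0` is
taken too often and is excluded from the test functions; it forces `p ≡ 1` modulo the order of `b`
modulo `q`, which is rare by the sieve bound for primes in progressions because few `q` have a given
order. Since `A_N` has at least a constant times `(N / log N) * ∑ 1 / q`, that is
`(N / log N) * log log log N`, elements, dividing by its cardinality gives the theorem.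
-/

section PowModDiscrepancy

open Finset
open scoped ArithmeticFunction.Moebius

section SelbergWeights

/-- The squarefree moduli `l ≤ R` coprime to `k`, on which the sieve is supported. -/
def sieveSupport (R k : ℕ) : Finset ℕ := {l ∈ Icc 1 R | Squarefree l ∧ l.Coprime k}

/-- The normalising factor of the sieve. In place of the classical `∑ μ²(l) / φ(l)` we use
`∑ μ²(l) / l`, which is of the same order of magnitude and easier to bound from below. -/
noncomputable def sieveMass (R k : ℕ) : ℝ := ∑ l ∈ sieveSupport R k, (l : ℝ)⁻¹

variable {R k l : ℕ}

lemma mem_sieveSupport :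
    l ∈ sieveSupport R k ↔ (1 ≤ l ∧ l ≤ R) ∧ Squarefree l ∧ l.Coprime k := by
  simp only [sieveSupport, mem_filter, mem_Icc]

lemma sieveMass_pos (hR : 1 ≤ R) : 0 < sieveMass R k :=
  sum_pos' (fun _ _ => by positivity) ⟨1, by simp [mem_sieveSupport, hR], by norm_num⟩

lemma sum_inv_le_mul_of_factors {S A B : Finset ℕ} (g : ℕ → ℕ)
    (hS : ∀ n ∈ S, ∃ a ∈ A, ∃ c ∈ B, g a * c = n) :
    ∑ n ∈ S, (n : ℝ)⁻¹ ≤ (∑ a ∈ A, (g a : ℝ)⁻¹) * ∑ c ∈ B, (c : ℝ)⁻¹ := by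
  have hsub : S ⊆ (A ×ˢ B).image fun x => g x.1 * x.2 := fun n hn => by
    obtain ⟨a, ha, c, hc, rfl⟩ := hS n hn
    exact mem_image.2 ⟨(a, c), mk_mem_product ha hc, rfl⟩
  calc ∑ n ∈ S, (n : ℝ)⁻¹
      ≤ ∑ n ∈ (A ×ˢ B).image fun x => g x.1 * x.2, (n : ℝ)⁻¹ :=
        sum_le_sum_of_subset_of_nonneg hsub fun _ _ _ => by positivity
    _ ≤ ∑ x ∈ A ×ˢ B, ((g x.1 * x.2 : ℕ) : ℝ)⁻¹ :=
        sum_image_le_of_nonneg fun _ _ => by positivity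
    _ = _ := by simp only [Nat.cast_mul, mul_inv, sum_mul_sum, sum_product]

lemma sum_inv_sq_le_two (R : ℕ) : ∑ m ∈ Icc 1 R, ((m : ℝ) ^ 2)⁻¹ ≤ 2 := by
  have hIcc : Icc 1 R = Ioo 0 (R + 1) := by ext; simp only [mem_Icc, mem_Ioo]; lia
  simpa [hIcc] using sum_Ioo_inv_sq_le (α := ℝ) 0 (R + 1)

lemma sum_inv_le_two_mul_sieveMass (R : ℕ) :
    ∑ n ∈ Icc 1 R, (n : ℝ)⁻¹ ≤ 2 * sieveMass R 1 := by
  have hfactor := sum_inv_le_mul_of_factors (S := Icc 1 R) (A := Icc 1 R)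
    (B := sieveSupport R 1) (· ^ 2) fun n hn => by
      obtain ⟨hn1, hnR⟩ := mem_Icc.1 hn
      obtain ⟨a, m, ha, hm, rfl, hsq⟩ := Nat.sq_mul_squarefree_of_pos hn1
      refine ⟨m, mem_Icc.2 ⟨hm, ?_⟩, a, mem_sieveSupport.2 ⟨⟨ha, ?_⟩, hsq, by simp⟩, rfl⟩
      · exact (Nat.le_self_pow two_ne_zero m).trans ((Nat.le_mul_of_pos_right _ ha).trans hnR)
      · exact (Nat.le_mul_of_pos_left _ (pow_pos hm 2)).trans hnR
  refine hfactor.trans (mul_le_mul_of_nonneg_right ?_ (sum_nonneg fun _ _ => by positivity))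
  exact_mod_cast sum_inv_sq_le_two R

lemma sum_inv_le_one_add_log (n : ℕ) : ∑ m ∈ Icc 1 n, (m : ℝ)⁻¹ ≤ 1 + Real.log n := by
  have h := harmonic_le_one_add_log n
  simpa [harmonic_eq_sum_Icc] using h

lemma log_le_sum_inv (hR : 1 ≤ R) : Real.log R ≤ ∑ m ∈ Icc 1 R, (m : ℝ)⁻¹ := by
  have h := log_add_one_le_harmonic R
  calc Real.log R ≤ Real.log ↑(R + 1) := Real.log_le_log (by positivity) (by simp)
    _ ≤ _ := by simpa [harmonic_eq_sum_Icc] using h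

lemma sieveMass_one_le (hk : 1 ≤ k) :
    sieveMass R 1 ≤ (1 + Real.log k) * sieveMass R k := by
  have hfactor := sum_inv_le_mul_of_factors (S := sieveSupport R 1) (A := Icc 1 k)
    (B := sieveSupport R k) id fun n hn => by
      obtain ⟨⟨hn1, hnR⟩, hsq, -⟩ := mem_sieveSupport.1 hn
      obtain ⟨m, hm⟩ := Nat.gcd_dvd_left n k
      have hmn : m ∣ n := Dvd.intro_left _ hm.symm
      have hcop : (n.gcd k).Coprime m := Nat.coprime_of_squarefree_mul (hm ▸ hsq)
      refine ⟨n.gcd k, mem_Icc.2 ⟨Nat.gcd_pos_of_pos_left _ hn1, Nat.gcd_le_right _ hk⟩, m,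
        mem_sieveSupport.2 ⟨⟨Nat.pos_of_dvd_of_pos hmn hn1, (Nat.le_of_dvd hn1 hmn).trans hnR⟩,
          hsq.squarefree_of_dvd hmn, ?_⟩, hm.symm⟩
      exact Nat.eq_one_of_dvd_coprimes hcop (Nat.gcd_dvd_gcd_of_dvd_left _ hmn)
        (Nat.gcd_dvd_left m k)
  refine hfactor.trans (mul_le_mul_of_nonneg_right (sum_inv_le_one_add_log k) ?_)
  exact sum_nonneg fun _ _ => by positivity

lemma log_le_mul_sieveMass (hR : 1 ≤ R) (hk : 1 ≤ k) :
    Real.log R ≤ 2 * (1 + Real.log k) * sieveMass R k := by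
  linarith [log_le_sum_inv hR, sum_inv_le_two_mul_sieveMass R, sieveMass_one_le (R := R) hk]

/-- The diagonal variables `y` of the Selberg sieve. -/
noncomputable def selbergDual (R k l : ℕ) : ℝ :=
  if l ∈ sieveSupport R k then (μ l : ℝ) / (l * sieveMass R k) else 0

/-- The Selberg sieve coefficients `λ`, obtained from `selbergDual` by Möbius inversion. -/
noncomputable def selbergCoeff (R k d : ℕ) : ℝ :=
  d * ∑ l ∈ sieveSupport R k with d ∣ l, (μ (l / d) : ℝ) * selbergDual R k l

lemma selbergCoeff_one (hR : 1 ≤ R) : selbergCoeff R k 1 = 1 := by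
  have hV := sieveMass_pos (k := k) hR
  have hterm : ∀ l ∈ sieveSupport R k,
      (μ l : ℝ) * selbergDual R k l = (l : ℝ)⁻¹ / sieveMass R k := fun l hl => by
    have hsq : (μ l : ℝ) ^ 2 = 1 := by
      exact_mod_cast ArithmeticFunction.moebius_sq_eq_one_of_squarefree (mem_sieveSupport.1 hl).2.1
    rw [selbergDual, if_pos hl, ← mul_div_assoc, ← sq, hsq, inv_eq_one_div, div_div]
  simp only [selbergCoeff, Nat.cast_one, one_mul, one_dvd, filter_true, Nat.div_one]
  rw [sum_congr rfl hterm, ← sum_div]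
  exact div_self hV.ne'

lemma abs_moebius_cast_le_one (n : ℕ) : |(μ n : ℝ)| ≤ 1 := by
  exact_mod_cast ArithmeticFunction.abs_moebius_le_one (n := n)

lemma abs_selbergDual_le (hR : 1 ≤ R) (hl : l ∈ sieveSupport R k) :
    |selbergDual R k l| ≤ (l : ℝ)⁻¹ / sieveMass R k := by
  have hV := sieveMass_pos (k := k) hR
  rw [selbergDual, if_pos hl, abs_div, abs_of_nonneg (by positivity : 0 ≤ l * sieveMass R k),
    inv_eq_one_div, div_div]
  gcongr
  exact abs_moebius_cast_le_one l

lemma abs_selbergCoeff_le (hR : 1 ≤ R) (d : ℕ) : |selbergCoeff R k d| ≤ d := by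
  rw [selbergCoeff, abs_mul, Nat.abs_cast]
  refine mul_le_of_le_one_right (by positivity) ?_
  calc |∑ l ∈ sieveSupport R k with d ∣ l, (μ (l / d) : ℝ) * selbergDual R k l|
      ≤ ∑ l ∈ sieveSupport R k with d ∣ l, |(μ (l / d) : ℝ) * selbergDual R k l| :=
        abs_sum_le_sum_abs _ _
    _ ≤ ∑ l ∈ sieveSupport R k, |(μ (l / d) : ℝ) * selbergDual R k l| :=
        sum_le_sum_of_subset_of_nonneg (filter_subset _ _) fun _ _ _ => abs_nonneg _
    _ ≤ ∑ l ∈ sieveSupport R k, (l : ℝ)⁻¹ / sieveMass R k := sum_le_sum fun l hl => by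
        rw [abs_mul]
        exact (mul_le_of_le_one_left (abs_nonneg _) (abs_moebius_cast_le_one _)).trans
          (abs_selbergDual_le hR hl)
    _ = 1 := by
        rw [← sum_div]
        exact div_self (sieveMass_pos hR).ne'

lemma selbergCoeff_eq_zero_of_not_coprime {d : ℕ} (h : ¬ d.Coprime k) :
    selbergCoeff R k d = 0 := by
  rw [selbergCoeff, filter_false_of_mem, sum_empty, mul_zero]
  exact fun l hl hd => h ((mem_sieveSupport.1 hl).2.2.coprime_dvd_left hd)

lemma sum_moebius_divisors (n : ℕ) :
    ∑ d ∈ n.divisors, μ d = if n = 1 then 1 else 0 := by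
  rw [← ArithmeticFunction.coe_mul_zeta_apply, ArithmeticFunction.moebius_mul_coe_zeta,
    ArithmeticFunction.one_apply]

lemma sum_moebius_div_eq_ite {l m : ℕ} (hm : m ≠ 0) :
    ∑ d ∈ m.divisors with l ∣ d, μ (m / d) = if l = m then 1 else 0 := by
  by_cases hlm : l ∣ m
  · obtain ⟨n, rfl⟩ := hlm
    obtain ⟨hl, hn⟩ := mul_ne_zero_iff.1 hm
    have hmul : {d ∈ (l * n).divisors | l ∣ d} = n.divisors.image (l * ·) := by
      ext d
      simp only [mem_filter, Nat.mem_divisors, mem_image]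
      constructor
      · rintro ⟨⟨h, -⟩, e, rfl⟩
        exact ⟨e, ⟨Nat.dvd_of_mul_dvd_mul_left (Nat.pos_of_ne_zero hl) h, hn⟩, rfl⟩
      · rintro ⟨e, ⟨he, -⟩, rfl⟩
        exact ⟨⟨Nat.mul_dvd_mul_left l he, hm⟩, dvd_mul_right l e⟩
    rw [hmul, sum_image fun _ _ _ _ h => Nat.eq_of_mul_eq_mul_left (Nat.pos_of_ne_zero hl) h]
    simp only [Nat.mul_div_mul_left _ _ (Nat.pos_of_ne_zero hl)]
    rw [Nat.sum_div_divisors n (fun e => μ e), sum_moebius_divisors]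
    exact if_congr ((Nat.mul_eq_left hl).symm.trans eq_comm) rfl rfl
  · rw [filter_false_of_mem fun d hd hld => hlm (hld.trans (Nat.dvd_of_mem_divisors hd)),
      sum_empty, if_neg (by rintro rfl; exact hlm dvd_rfl)]

lemma sum_selbergCoeff_div (R k l : ℕ) :
    ∑ d ∈ Icc 1 R with l ∣ d, selbergCoeff R k d / d = selbergDual R k l := by
  have hcoeff : ∀ d ∈ {d ∈ Icc 1 R | l ∣ d}, selbergCoeff R k d / d =
      ∑ m ∈ sieveSupport R k, if d ∣ m then (μ (m / d) : ℝ) * selbergDual R k m else 0 :=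
    fun d hd => by
      have hd0 : (d : ℝ) ≠ 0 :=
        Nat.cast_ne_zero.2 (Nat.one_le_iff_ne_zero.1 (mem_Icc.1 (mem_filter.1 hd).1).1)
      rw [selbergCoeff, mul_div_cancel_left₀ _ hd0, sum_filter]
  have hinv : ∀ m ∈ sieveSupport R k, (∑ d ∈ Icc 1 R with l ∣ d,
      if d ∣ m then (μ (m / d) : ℝ) * selbergDual R k m else 0) =
        if l = m then selbergDual R k m else 0 := fun m hm => by
    obtain ⟨hm1, hmR⟩ := (mem_sieveSupport.1 hm).1
    have hset : {d ∈ {d ∈ Icc 1 R | l ∣ d} | d ∣ m} = {d ∈ m.divisors | l ∣ d} := by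
      ext d
      simp only [mem_filter, mem_Icc, Nat.mem_divisors]
      constructor
      · rintro ⟨⟨-, hld⟩, hdm⟩
        exact ⟨⟨hdm, by lia⟩, hld⟩
      · rintro ⟨⟨hdm, -⟩, hld⟩
        exact ⟨⟨⟨Nat.pos_of_dvd_of_pos hdm hm1, (Nat.le_of_dvd hm1 hdm).trans hmR⟩, hld⟩, hdm⟩
    rw [← sum_filter, hset, ← sum_mul, ← Int.cast_sum, sum_moebius_div_eq_ite (by lia)]
    split_ifs <;> simp
  rw [sum_congr rfl hcoeff, sum_comm, sum_congr rfl hinv, sum_ite_eq]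
  exact ite_eq_left_iff.2 fun h => by rw [selbergDual, if_neg h]

lemma inv_lcm_eq_sum_totient {d e : ℕ} (hd : d ∈ Icc 1 R) (he : e ∈ Icc 1 R) :
    ((d.lcm e : ℕ) : ℝ)⁻¹ =
      (d : ℝ)⁻¹ * (e : ℝ)⁻¹ * ∑ l ∈ Icc 1 R with l ∣ d ∧ l ∣ e, (l.totient : ℝ) := by
  obtain ⟨hd1, hdR⟩ := mem_Icc.1 hd
  obtain ⟨he1, -⟩ := mem_Icc.1 he
  have hset : {l ∈ Icc 1 R | l ∣ d ∧ l ∣ e} = (d.gcd e).divisors := by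
    ext l
    simp only [mem_filter, mem_Icc, Nat.mem_divisors, Nat.dvd_gcd_iff]
    refine ⟨fun h => ⟨h.2, (Nat.gcd_pos_of_pos_left _ hd1).ne'⟩, fun h => ⟨⟨?_, ?_⟩, h.1⟩⟩
    · exact Nat.pos_of_dvd_of_pos h.1.1 hd1
    · exact (Nat.le_of_dvd hd1 h.1.1).trans hdR
  rw [hset, ← Nat.cast_sum, Nat.sum_totient]
  have hlcm : (d.lcm e : ℝ) ≠ 0 := Nat.cast_ne_zero.2 (Nat.lcm_pos hd1 he1).ne'
  have hprod : (d.gcd e : ℝ) * d.lcm e = d * e := by exact_mod_cast Nat.gcd_mul_lcm d e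
  rw [← mul_inv, ← hprod]
  have hgcd : (d.gcd e : ℝ) ≠ 0 := Nat.cast_ne_zero.2 (Nat.gcd_pos_of_pos_left _ hd1).ne'
  field_simp

lemma sum_selbergCoeff_mul_eq_sum_sq (R k : ℕ) :
    ∑ d ∈ Icc 1 R, ∑ e ∈ Icc 1 R,
      selbergCoeff R k d * selbergCoeff R k e * ((d.lcm e : ℕ) : ℝ)⁻¹ =
        ∑ l ∈ Icc 1 R, selbergDual R k l ^ 2 * l.totient := by
  have hterm : ∀ d ∈ Icc 1 R, ∀ e ∈ Icc 1 R,
      selbergCoeff R k d * selbergCoeff R k e * ((d.lcm e : ℕ) : ℝ)⁻¹ =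
        ∑ l ∈ Icc 1 R, (if l ∣ d then selbergCoeff R k d / d else 0) *
          (if l ∣ e then selbergCoeff R k e / e else 0) * l.totient := fun d hd e he => by
    rw [inv_lcm_eq_sum_totient hd he, sum_filter, mul_sum, mul_sum]
    refine sum_congr rfl fun l _ => ?_
    by_cases hld : l ∣ d <;> by_cases hle : l ∣ e <;> simp only [hld, hle, and_self, and_false,
      false_and, if_true, if_false, mul_zero, zero_mul]
    ring
  rw [sum_congr rfl fun d hd => sum_congr rfl (hterm d hd), sum_congr rfl fun d _ => sum_comm,
    sum_comm]
  refine sum_congr rfl fun l _ => ?_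
  rw [← sum_selbergCoeff_div R k l, sum_filter, sq, sum_mul_sum, sum_mul]
  exact sum_congr rfl fun d _ => (sum_mul ..).symm

lemma sum_selbergDual_sq_le (hR : 1 ≤ R) :
    ∑ l ∈ Icc 1 R, selbergDual R k l ^ 2 * l.totient ≤ (sieveMass R k)⁻¹ := by
  have hV := sieveMass_pos (k := k) hR
  have hterm : ∀ l ∈ sieveSupport R k,
      selbergDual R k l ^ 2 * l.totient ≤ (l : ℝ)⁻¹ / sieveMass R k ^ 2 := fun l hl => by
    have hl0 : (0 : ℝ) < l := Nat.cast_pos.2 (mem_sieveSupport.1 hl).1.1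
    calc selbergDual R k l ^ 2 * l.totient ≤ ((l : ℝ)⁻¹ / sieveMass R k) ^ 2 * l := by
          gcongr ?_ * ?_
          · exact sq_le_sq' (neg_le_of_abs_le (abs_selbergDual_le hR hl))
              (le_of_abs_le (abs_selbergDual_le hR hl))
          · exact_mod_cast Nat.totient_le l
      _ = _ := by field_simp
  calc ∑ l ∈ Icc 1 R, selbergDual R k l ^ 2 * l.totient
      = ∑ l ∈ sieveSupport R k, selbergDual R k l ^ 2 * l.totient := by
        refine (sum_subset (filter_subset _ _) fun l _ hl => ?_).symm
        rw [selbergDual, sieveSupport, if_neg hl, sq, zero_mul, zero_mul]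
    _ ≤ ∑ l ∈ sieveSupport R k, (l : ℝ)⁻¹ / sieveMass R k ^ 2 := sum_le_sum hterm
    _ = sieveMass R k / sieveMass R k ^ 2 := (sum_div ..).symm
    _ = (sieveMass R k)⁻¹ := by field_simp

lemma sum_selbergCoeff_mul_le (hR : 2 ≤ R) (hk : 1 ≤ k) :
    ∑ d ∈ Icc 1 R, ∑ e ∈ Icc 1 R,
      selbergCoeff R k d * selbergCoeff R k e * ((d.lcm e : ℕ) : ℝ)⁻¹ ≤
        2 * (1 + Real.log k) / Real.log R := by
  have hR1 : 1 ≤ R := one_le_two.trans hR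
  rw [sum_selbergCoeff_mul_eq_sum_sq]
  refine (sum_selbergDual_sq_le hR1).trans ?_
  rw [inv_eq_one_div,
    div_le_div_iff₀ (sieveMass_pos hR1) (Real.log_pos (Nat.one_lt_cast.2 hR)), one_mul]
  exact log_le_mul_sieveMass hR1 hk

/-- The `Λ²` majorant of the primes above `R`. -/
noncomputable def selbergWeight (R k n : ℕ) : ℝ :=
  (∑ d ∈ Icc 1 R with d ∣ n, selbergCoeff R k d) ^ 2

lemma selbergWeight_nonneg (R k n : ℕ) : 0 ≤ selbergWeight R k n := sq_nonneg _

lemma selbergWeight_prime {p : ℕ} (hR : 1 ≤ R) (hp : p.Prime) (hpR : R < p) :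
    selbergWeight R k p = 1 := by
  have hdvd : {d ∈ Icc 1 R | d ∣ p} = {1} := by
    ext d
    simp only [mem_filter, mem_Icc, mem_singleton, Nat.dvd_prime hp]
    lia
  rw [selbergWeight, hdvd, sum_singleton, selbergCoeff_one hR, one_pow]

lemma sum_selbergWeight_mul (R k : ℕ) (S : Finset ℕ) (f : ℕ → ℝ) :
    ∑ n ∈ S, selbergWeight R k n * f n = ∑ d ∈ Icc 1 R, ∑ e ∈ Icc 1 R,
      selbergCoeff R k d * selbergCoeff R k e * ∑ n ∈ S with d.lcm e ∣ n, f n := by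
  have hsq : ∀ n ∈ S, selbergWeight R k n * f n = ∑ d ∈ Icc 1 R, ∑ e ∈ Icc 1 R,
      if d.lcm e ∣ n then selbergCoeff R k d * selbergCoeff R k e * f n else 0 := fun n _ => by
    rw [selbergWeight, sum_filter, sq, sum_mul_sum, sum_mul]
    refine sum_congr rfl fun d _ => (sum_mul ..).trans (sum_congr rfl fun e _ => ?_)
    by_cases hd : d ∣ n <;> by_cases he : e ∣ n <;> simp [Nat.lcm_dvd_iff, hd, he]
  rw [sum_congr rfl hsq, sum_comm]
  refine sum_congr rfl fun d _ => sum_comm.trans (sum_congr rfl fun e _ => ?_)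
  simp only [mul_sum, sum_filter, mul_ite, mul_zero]

end SelbergWeights

section ArithmeticProgressions

lemma abs_card_filter_modEq_sub_div_le (X v : ℕ) {r : ℕ} (hr : 0 < r) :
    |(#{n ∈ Ioc 0 X | n ≡ v [MOD r]} : ℝ) - X / r| ≤ 1 := by
  have hcard := Nat.Ioc_filter_modEq_card 0 X hr v
  set x : ℚ := ((X : ℚ) - v) / r with hx
  set y : ℚ := (((0 : ℕ) : ℚ) - v) / r with hy
  have hle : y ≤ x := by rw [hx, hy]; gcongr; exact X.zero_le
  have hdiff : (X : ℚ) / r = x - y := by rw [hx, hy, ← sub_div]; simp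
  rw [max_eq_left (sub_nonneg.2 (Int.floor_le_floor hle))] at hcard
  have hrat : |((#{n ∈ Ioc 0 X | n ≡ v [MOD r]} : ℤ) : ℚ) - X / r| ≤ 1 := by
    rw [hcard, Int.cast_sub, hdiff, abs_le]
    constructor <;>
      linarith [Int.floor_le x, Int.lt_floor_add_one x, Int.floor_le y, Int.lt_floor_add_one y]
  have hreal := (Rat.cast_le (K := ℝ)).2 hrat
  push_cast at hreal
  exact hreal

lemma abs_card_modEq_dvd_sub_div_le (X v : ℕ) {k m : ℕ} (hk : 0 < k) (hm : 0 < m)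
    (hmk : m.Coprime k) :
    |(#{n ∈ Ioc 0 X | n ≡ v [MOD k] ∧ m ∣ n} : ℝ) - X / (k * m)| ≤ 1 := by
  obtain ⟨c, hcm, hck⟩ := Nat.chineseRemainder hmk 0 v
  have hiff : ∀ n, (n ≡ v [MOD k] ∧ m ∣ n) ↔ n ≡ c [MOD (k * m)] := fun n => by
    rw [← Nat.modEq_and_modEq_iff_modEq_mul hmk.symm, ← Nat.modEq_zero_iff_dvd]
    exact ⟨fun h => ⟨h.1.trans hck.symm, h.2.trans hcm.symm⟩,
      fun h => ⟨h.1.trans hck, h.2.trans hcm⟩⟩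
  simp only [hiff]
  exact_mod_cast abs_card_filter_modEq_sub_div_le X c (Nat.mul_pos hk hm)

variable {R k : ℕ}

lemma selbergCoeff_mul_card_le (X v : ℕ) (hR : 1 ≤ R) (hk : 1 ≤ k) {d e : ℕ} (hd : d ∈ Icc 1 R)
    (he : e ∈ Icc 1 R) :
    selbergCoeff R k d * selbergCoeff R k e * #{n ∈ Ioc 0 X | n ≡ v [MOD k] ∧ d.lcm e ∣ n} ≤
      X / k * (selbergCoeff R k d * selbergCoeff R k e * ((d.lcm e : ℕ) : ℝ)⁻¹) + (R : ℝ) ^ 2 := by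
  rw [mem_Icc] at hd he
  by_cases hdk : d.Coprime k
  swap
  · simp [selbergCoeff_eq_zero_of_not_coprime hdk]
  by_cases hek : e.Coprime k
  swap
  · simp [selbergCoeff_eq_zero_of_not_coprime hek]
  have hlcm : (d.lcm e).Coprime k :=
    (Nat.Coprime.mul_left hdk hek).coprime_dvd_left (Nat.lcm_dvd_mul d e)
  have hcount := abs_card_modEq_dvd_sub_div_le X v hk (Nat.lcm_pos hd.1 he.1) hlcm
  set c : ℝ := (#{n ∈ Ioc 0 X | n ≡ v [MOD k] ∧ d.lcm e ∣ n} : ℝ)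
  have hcoeff : |selbergCoeff R k d * selbergCoeff R k e| ≤ (R : ℝ) ^ 2 := by
    rw [abs_mul, sq]
    gcongr
    · exact (abs_selbergCoeff_le hR d).trans (Nat.cast_le.2 hd.2)
    · exact (abs_selbergCoeff_le hR e).trans (Nat.cast_le.2 he.2)
  have herror : selbergCoeff R k d * selbergCoeff R k e * (c - X / (k * (d.lcm e : ℕ))) ≤
      (R : ℝ) ^ 2 := by
    refine (le_abs_self _).trans ?_
    rw [abs_mul]
    exact (mul_le_of_le_one_right (abs_nonneg _) hcount).trans hcoeff
  have hmain : (X : ℝ) / (k * (d.lcm e : ℕ)) = X / k * ((d.lcm e : ℕ) : ℝ)⁻¹ := by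
    rw [← div_div, div_eq_mul_inv]
  rw [hmain] at herror
  linarith

lemma sum_selbergWeight_modEq_le (X v : ℕ) (hR : 2 ≤ R) (hk : 1 ≤ k) :
    ∑ n ∈ Ioc 0 X with n ≡ v [MOD k], selbergWeight R k n ≤
      X / k * (2 * (1 + Real.log k) / Real.log R) + (R : ℝ) ^ 4 := by
  have hexpand := sum_selbergWeight_mul R k {n ∈ Ioc 0 X | n ≡ v [MOD k]} 1
  simp only [Pi.one_apply, mul_one, filter_filter, sum_const, nsmul_eq_mul] at hexpand
  rw [hexpand]
  calc _ ≤ ∑ d ∈ Icc 1 R, ∑ e ∈ Icc 1 R, (X / k *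
          (selbergCoeff R k d * selbergCoeff R k e * ((d.lcm e : ℕ) : ℝ)⁻¹) + (R : ℝ) ^ 2) :=
        sum_le_sum fun d hd => sum_le_sum fun e he =>
          selbergCoeff_mul_card_le X v (one_le_two.trans hR) hk hd he
    _ = X / k * (∑ d ∈ Icc 1 R, ∑ e ∈ Icc 1 R,
          selbergCoeff R k d * selbergCoeff R k e * ((d.lcm e : ℕ) : ℝ)⁻¹) + (R : ℝ) ^ 4 := by
        simp only [sum_add_distrib, ← mul_sum, sum_const, Nat.card_Icc, nsmul_eq_mul,
          Nat.add_sub_cancel]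
        ring
    _ ≤ _ := by
        gcongr
        exact sum_selbergCoeff_mul_le hR hk

lemma card_primes_modEq_le (X v : ℕ) (hR : 2 ≤ R) (hk : 1 ≤ k) :
    (#{p ∈ Ioc R X | p.Prime ∧ p ≡ v [MOD k]} : ℝ) ≤
      X / k * (2 * (1 + Real.log k) / Real.log R) + (R : ℝ) ^ 4 := by
  have hR1 : 1 ≤ R := one_le_two.trans hR
  calc (#{p ∈ Ioc R X | p.Prime ∧ p ≡ v [MOD k]} : ℝ)
      = ∑ p ∈ Ioc R X with p.Prime ∧ p ≡ v [MOD k], selbergWeight R k p := by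
        rw [card_eq_sum_ones, Nat.cast_sum, Nat.cast_one]
        refine sum_congr rfl fun p hp => ?_
        obtain ⟨hp, hprime, -⟩ := mem_filter.1 hp
        exact (selbergWeight_prime hR1 hprime (mem_Ioc.1 hp).1).symm
    _ ≤ ∑ n ∈ Ioc 0 X with n ≡ v [MOD k], selbergWeight R k n := by
        refine sum_le_sum_of_subset_of_nonneg (fun p hp => ?_) fun n _ _ =>
          selbergWeight_nonneg R k n
        simp only [mem_filter, mem_Ioc] at hp ⊢
        exact ⟨⟨by lia, hp.1.2⟩, hp.2.2⟩
    _ ≤ _ := sum_selbergWeight_modEq_le X v hR hk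

lemma sum_selbergWeight_one_le (X : ℕ) (hR : 2 ≤ R) :
    ∑ n ∈ Ioc 0 X, selbergWeight R 1 n ≤ X * (2 / Real.log R) + (R : ℝ) ^ 4 := by
  simpa [Nat.modEq_one] using sum_selbergWeight_modEq_le X 0 hR le_rfl

end ArithmeticProgressions

section PeriodicSums

variable {E : Type*} [SeminormedAddCommGroup E] {f : ℕ → E} {L : ℕ}

lemma sum_range_mul_eq_sum_sum {G : Type*} [AddCommMonoid G] (f : ℕ → G) (M q : ℕ) :
    ∑ n ∈ range (M * q), f n = ∑ a ∈ range M, ∑ t ∈ range q, f (a + M * t) := by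
  induction q with
  | zero => simp
  | succ q ih =>
    simp only [sum_range_succ, sum_add_distrib, ← ih, Nat.mul_succ, sum_range_add,
      add_comm _ (M * q)]

lemma periodic_sum_range {G : Type*} [AddCommMonoid G] {f : ℕ → G} (hf : f.Periodic L)
    (hzero : ∑ n ∈ range L, f n = 0) : (fun X => ∑ n ∈ range X, f n).Periodic L := fun X => by
  dsimp only
  rw [add_comm X L, sum_range_add, hzero, zero_add]
  exact sum_congr rfl fun n _ => by rw [add_comm, hf]

lemma norm_sum_range_le_of_periodic {B : ℝ} (hL : 0 < L) (hf : f.Periodic L)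
    (hzero : ∑ n ∈ range L, f n = 0) (hB : ∀ n, ‖f n‖ ≤ B) (X : ℕ) :
    ‖∑ n ∈ range X, f n‖ ≤ L * B := by
  have hB0 : 0 ≤ B := (norm_nonneg _).trans (hB 0)
  rw [← (periodic_sum_range hf hzero).map_mod_nat X]
  calc ‖∑ n ∈ range (X % L), f n‖ ≤ ∑ _n ∈ range (X % L), B := norm_sum_le_of_le _ fun n _ => hB n
    _ ≤ L * B := by
      rw [sum_const, card_range, nsmul_eq_mul]
      gcongr
      exact (Nat.mod_lt X hL).le

lemma norm_sum_Ioc_le_of_periodic {B : ℝ} (hL : 0 < L) (hf : f.Periodic L)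
    (hzero : ∑ n ∈ range L, f n = 0) (hB : ∀ n, ‖f n‖ ≤ B) (X Y : ℕ) :
    ‖∑ n ∈ Ioc X Y, f n‖ ≤ 2 * (L * B) := by
  have hB0 : 0 ≤ B := (norm_nonneg _).trans (hB 0)
  rcases le_total X Y with hXY | hYX
  · have hIco : Ioc X Y = Ico (X + 1) (Y + 1) := by ext; simp only [mem_Ioc, mem_Ico]; lia
    have hprefix := norm_sum_range_le_of_periodic hL hf hzero hB
    rw [hIco, sum_Ico_eq_sub _ (Nat.succ_le_succ hXY), two_mul]
    exact (norm_sub_le _ _).trans (add_le_add (hprefix _) (hprefix _))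
  · rw [Ioc_eq_empty_of_le hYX, sum_empty, norm_zero]
    positivity

end PeriodicSums

section CrtDigit

/-- The residue `k` modulo `q` for which `b ^ (p * q) = b ^ q + p * k` modulo `p * q` when `p` and
`q` are distinct primes. It vanishes when `q ∣ n`, since `0⁻¹ = 0` in `ZMod q`. -/
def crtDigit (b q n : ℕ) : ZMod q := ((b : ZMod q) ^ n - b) * (n : ZMod q)⁻¹

/-- Test functions for the equidistribution of `crtDigit` over the nonzero residue classes.
The class of `0` is excluded because `crtDigit` takes the value `0` too often. -/
structure IsBalanced {q : ℕ} (φ : ZMod q → ℝ) : Prop where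
  map_zero : φ 0 = 0
  abs_le_one : ∀ x, |φ x| ≤ 1
  sum_eq_zero : ∑ t ∈ range q, φ t = 0

lemma pow_mul_mod_mul_eq_s17 {b p q : ℕ} (hp : p.Prime) (hq : q.Prime) (hbp : b ^ q < p)
    (hqp : q < p) : b ^ (p * q) % (p * q) = b ^ q + p * (crtDigit b q p).val := by
  have := Fact.mk hp
  have := Fact.mk hq
  have hp0 : (p : ZMod q) ≠ 0 := fun h =>
    hqp.ne ((Nat.prime_dvd_prime_iff_eq hq hp).1 ((ZMod.natCast_eq_zero_iff p q).1 h))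
  have hmod_p : b ^ (p * q) ≡ b ^ q + p * (crtDigit b q p).val [MOD p] := by
    rw [← ZMod.natCast_eq_natCast_iff]
    push_cast
    rw [mul_comm p q, pow_mul, ZMod.pow_card, ZMod.natCast_self, zero_mul, add_zero]
  have hmod_q : b ^ (p * q) ≡ b ^ q + p * (crtDigit b q p).val [MOD q] := by
    rw [← ZMod.natCast_eq_natCast_iff]
    push_cast
    rw [pow_mul, ZMod.pow_card, ZMod.pow_card, ZMod.natCast_zmod_val, crtDigit]
    field_simp
    ring
  have hmod := (Nat.modEq_and_modEq_iff_modEq_mul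
    ((Nat.coprime_primes hp hq).2 hqp.ne')).1 ⟨hmod_p, hmod_q⟩
  rw [hmod, Nat.mod_eq_of_lt]
  calc b ^ q + p * (crtDigit b q p).val < p + p * (crtDigit b q p).val := by gcongr
    _ = p * ((crtDigit b q p).val + 1) := by ring
    _ ≤ p * q := Nat.mul_le_mul_left p (ZMod.val_lt _)

variable {b q : ℕ}

lemma crtDigit_eq_zero_of_dvd {n : ℕ} (h : q ∣ n) : crtDigit b q n = 0 := by
  rw [crtDigit, (ZMod.natCast_eq_zero_iff n q).2 h, ZMod.inv_zero, mul_zero]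

lemma pow_add_mul_eq_pow [Fact q.Prime] (hqb : ¬ q ∣ b) {M : ℕ} (hM : q - 1 ∣ M) (a t : ℕ) :
    (b : ZMod q) ^ (a + M * t) = (b : ZMod q) ^ a := by
  obtain ⟨c, rfl⟩ := hM
  rw [pow_add, mul_assoc, pow_mul,
    ZMod.pow_card_sub_one_eq_one (mt (ZMod.natCast_eq_zero_iff b q).1 hqb), one_pow, mul_one]

lemma periodic_crtDigit [Fact q.Prime] (hqb : ¬ q ∣ b) {M : ℕ} (hM : q - 1 ∣ M) (hqM : q ∣ M) :
    (crtDigit b q).Periodic M := fun n => by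
  have hpow := pow_add_mul_eq_pow hqb hM n 1
  rw [mul_one] at hpow
  rw [crtDigit, crtDigit, hpow, Nat.cast_add, (ZMod.natCast_eq_zero_iff M q).2 hqM, add_zero]

lemma sum_range_zmod_cast [NeZero q] (φ : ZMod q → ℝ) :
    ∑ t ∈ range q, φ t = ∑ x : ZMod q, φ x :=
  sum_bij' (fun t _ => (t : ZMod q)) (fun x _ => x.val) (fun _ _ => mem_univ _)
    (fun x _ => mem_range.2 x.val_lt) (fun _ ht => ZMod.val_cast_of_lt (mem_range.1 ht))
    (fun x _ => ZMod.natCast_zmod_val x) fun _ _ => rfl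

/-- Along such a progression `b ^ n` is constant while `n` runs over all residues modulo `q`. -/
lemma sum_crtDigit_progression_eq_zero [Fact q.Prime] (hqb : ¬ q ∣ b) {φ : ZMod q → ℝ}
    (hφ : IsBalanced φ) {M : ℕ} (hM : q - 1 ∣ M) (hMq : M.Coprime q) (a : ℕ) :
    ∑ t ∈ range q, φ (crtDigit b q (a + M * t)) = 0 := by
  set u : ZMod q := (b : ZMod q) ^ a - b
  have hdigit (t : ℕ) : crtDigit b q (a + M * t) = u * ((a : ZMod q) + M * (t : ZMod q))⁻¹ := by
    rw [crtDigit, pow_add_mul_eq_pow hqb hM]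
    push_cast
    rfl
  simp only [hdigit]
  by_cases hu : u = 0
  · simp only [hu, zero_mul, hφ.map_zero, sum_const_zero]
  have hM0 : (M : ZMod q) ≠ 0 := ((ZMod.isUnit_iff_coprime M q).2 hMq).ne_zero
  let e : ZMod q ≃ ZMod q := (((Equiv.mulLeft₀ (M : ZMod q) hM0).trans
    (Equiv.addLeft (a : ZMod q))).trans (Equiv.inv (ZMod q))).trans (Equiv.mulLeft₀ u hu)
  calc ∑ t ∈ range q, φ (u * ((a : ZMod q) + M * (t : ZMod q))⁻¹)
      = ∑ x : ZMod q, φ (e x) := sum_range_zmod_cast (φ ∘ e)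
    _ = ∑ x : ZMod q, φ x := e.sum_comp φ
    _ = 0 := (sum_range_zmod_cast φ).symm.trans hφ.sum_eq_zero

lemma abs_sum_crtDigit_mul_periodic_le [Fact q.Prime] (hqb : ¬ q ∣ b) {φ : ZMod q → ℝ}
    (hφ : IsBalanced φ) {M : ℕ} (hM0 : 0 < M) (hM : q - 1 ∣ M) (hMq : M.Coprime q) {H : ℕ → ℝ}
    (hH : H.Periodic M) (hH1 : ∀ n, |H n| ≤ 1) (X Y : ℕ) :
    |∑ n ∈ Ioc X Y, φ (crtDigit b q n) * H n| ≤ 2 * (M * q : ℕ) := by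
  have hHmul : ∀ a t, H (a + M * t) = H a := fun a t => by
    simpa only [mul_comm, smul_eq_mul] using hH.nsmul t a
  have hper : (fun n => φ (crtDigit b q n) * H n).Periodic (M * q) := fun n => by
    dsimp only
    rw [hHmul, periodic_crtDigit hqb (hM.mul_right q) (dvd_mul_left q M)]
  have hzero : ∑ n ∈ range (M * q), φ (crtDigit b q n) * H n = 0 := by
    rw [sum_range_mul_eq_sum_sum]
    refine sum_eq_zero fun a _ => ?_
    simp only [hHmul, ← sum_mul, sum_crtDigit_progression_eq_zero hqb hφ hM hMq, zero_mul]
  have hbound : ∀ n, ‖φ (crtDigit b q n) * H n‖ ≤ 1 := fun n => by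
    rw [Real.norm_eq_abs, abs_mul]
    exact mul_le_one₀ (hφ.abs_le_one _) (abs_nonneg _) (hH1 n)
  simpa only [mul_one, Real.norm_eq_abs] using
    norm_sum_Ioc_le_of_periodic (Nat.mul_pos hM0 (Fact.out : q.Prime).pos) hper hzero hbound X Y

lemma abs_sum_dvd_crtDigit_mul_le_of_lt {q' : ℕ} (hq : q.Prime) (hq' : q'.Prime)
    (hqb : ¬ q ∣ b) (hqb' : ¬ q' ∣ b) (hlt : q' < q) {φ : ZMod q → ℝ} {ψ : ZMod q' → ℝ}
    (hφ : IsBalanced φ) (hψ : IsBalanced ψ) {m : ℕ} (hm : 0 < m) (X Y : ℕ) :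
    |∑ n ∈ Ioc X Y with m ∣ n, φ (crtDigit b q n) * ψ (crtDigit b q' n)| ≤
      2 * (m * q ^ 2 * q' ^ 2 : ℕ) := by
  have := Fact.mk hq
  have := Fact.mk hq'
  by_cases hqm : q ∣ m
  · rw [sum_eq_zero fun n hn => by
      rw [crtDigit_eq_zero_of_dvd (hqm.trans (mem_filter.1 hn).2), hφ.map_zero, zero_mul],
      abs_zero]
    positivity
  set M := m * (q - 1) * (q' * (q' - 1)) with hM
  have hq1 : 0 < q - 1 := Nat.sub_pos_of_lt hq.one_lt
  have hq1' : 0 < q' - 1 := Nat.sub_pos_of_lt hq'.one_lt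
  have hM0 : 0 < M := Nat.mul_pos (Nat.mul_pos hm hq1) (Nat.mul_pos hq'.pos hq1')
  have hcop : ∀ x, 0 < x → x < q → x.Coprime q := fun x hx0 hxq =>
    (Nat.coprime_of_lt_prime hx0.ne' hxq hq).symm
  have hMq : M.Coprime q :=
    .mul_left (.mul_left ((hq.coprime_iff_not_dvd).2 hqm).symm (hcop _ hq1 (by lia)))
      (.mul_left (hcop _ hq'.pos hlt) (hcop _ hq1' (by lia)))
  let H : ℕ → ℝ := fun n => if m ∣ n then ψ (crtDigit b q' n) else 0
  have hH : H.Periodic M := fun n => by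
    have hmM : m ∣ M := ⟨(q - 1) * (q' * (q' - 1)), by rw [hM]; ring⟩
    have hperiod : (crtDigit b q').Periodic M :=
      periodic_crtDigit hqb' (Dvd.intro_left (m * (q - 1) * q') (by rw [hM]; ring))
        (Dvd.intro_left (m * (q - 1) * (q' - 1)) (by rw [hM]; ring))
    simp only [H, Nat.dvd_add_left hmM, hperiod n]
  have hH1 : ∀ n, |H n| ≤ 1 := fun n => by
    by_cases hmn : m ∣ n <;> simp [H, hmn, hψ.abs_le_one]
  have hbound := abs_sum_crtDigit_mul_periodic_le hqb hφ hM0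
    (Dvd.intro_left (m * (q' * (q' - 1))) (by rw [hM]; ring)) hMq hH hH1 X Y
  simp only [H, mul_ite, mul_zero, ← sum_filter] at hbound
  refine hbound.trans (mul_le_mul_of_nonneg_left (Nat.cast_le.2 ?_) zero_le_two)
  calc M * q ≤ m * q * (q' * q') * q := by rw [hM]; gcongr <;> lia
    _ = m * q ^ 2 * q' ^ 2 := by ring

lemma abs_sum_dvd_crtDigit_mul_le {q' : ℕ} (hq : q.Prime) (hq' : q'.Prime) (hqb : ¬ q ∣ b)
    (hqb' : ¬ q' ∣ b) (hne : q ≠ q') {φ : ZMod q → ℝ} {ψ : ZMod q' → ℝ} (hφ : IsBalanced φ)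
    (hψ : IsBalanced ψ) {m : ℕ} (hm : 0 < m) (X Y : ℕ) :
    |∑ n ∈ Ioc X Y with m ∣ n, φ (crtDigit b q n) * ψ (crtDigit b q' n)| ≤
      2 * (m * q ^ 2 * q' ^ 2 : ℕ) := by
  rcases hne.lt_or_gt with hlt | hlt
  · simp_rw [mul_comm (φ _), mul_right_comm m (q ^ 2)]
    exact abs_sum_dvd_crtDigit_mul_le_of_lt hq' hq hqb' hqb hlt hψ hφ hm X Y
  · exact abs_sum_dvd_crtDigit_mul_le_of_lt hq hq' hqb hqb' hlt hφ hψ hm X Y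

/-- Expanding the sieve weight reduces the correlation to sums over multiples of `lcm d e`. -/
lemma abs_sum_selbergWeight_crtDigit_mul_le {R Z q' : ℕ} (hR : 1 ≤ R) (hq : q.Prime)
    (hq' : q'.Prime) (hqb : ¬ q ∣ b) (hqb' : ¬ q' ∣ b) (hne : q ≠ q') (hqZ : q ≤ Z)
    (hqZ' : q' ≤ Z) {φ : ZMod q → ℝ} {ψ : ZMod q' → ℝ} (hφ : IsBalanced φ) (hψ : IsBalanced ψ)
    (k X Y : ℕ) :
    |∑ n ∈ Ioc X Y, selbergWeight R k n * (φ (crtDigit b q n) * ψ (crtDigit b q' n))| ≤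
      2 * (R : ℝ) ^ 6 * Z ^ 4 := by
  have hterm : ∀ d ∈ Icc 1 R, ∀ e ∈ Icc 1 R, |selbergCoeff R k d * selbergCoeff R k e *
      ∑ n ∈ Ioc X Y with d.lcm e ∣ n, φ (crtDigit b q n) * ψ (crtDigit b q' n)| ≤
        2 * (R : ℝ) ^ 4 * Z ^ 4 := fun d hd e he => by
    rw [mem_Icc] at hd he
    have hlcm : d.lcm e ≤ R * R := (Nat.le_of_dvd (Nat.mul_pos hd.1 he.1)
      (Nat.lcm_dvd_mul d e)).trans (Nat.mul_le_mul hd.2 he.2)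
    have hcorr := abs_sum_dvd_crtDigit_mul_le hq hq' hqb hqb' hne hφ hψ
      (Nat.lcm_pos hd.1 he.1) X Y
    rw [abs_mul, abs_mul]
    calc _ ≤ (R : ℝ) * R * (2 * (R * R * Z ^ 2 * Z ^ 2 : ℕ)) := by
          gcongr
          · exact (abs_selbergCoeff_le hR d).trans (Nat.cast_le.2 hd.2)
          · exact (abs_selbergCoeff_le hR e).trans (Nat.cast_le.2 he.2)
          · exact hcorr.trans (by gcongr)
      _ = _ := by push_cast; ring
  rw [sum_selbergWeight_mul]
  calc _ ≤ ∑ d ∈ Icc 1 R, ∑ e ∈ Icc 1 R, 2 * (R : ℝ) ^ 4 * Z ^ 4 :=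
        (abs_sum_le_sum_abs _ _).trans (sum_le_sum fun d hd =>
          (abs_sum_le_sum_abs _ _).trans (sum_le_sum (hterm d hd)))
    _ = _ := by
        simp only [sum_const, Nat.card_Icc, nsmul_eq_mul, Nat.add_sub_cancel]
        ring

end CrtDigit

section QuasiOrthogonality

variable {ι α : Type*} {I : Finset ι} {S : Finset α} {w : α → ℝ} {f : ι → α → ℝ} {W ε : ℝ}

lemma sum_mul_sq_sum_le_of_quasiorthogonal (hw : ∀ n ∈ S, 0 ≤ w n) (hW : ∑ n ∈ S, w n ≤ W)
    (hf : ∀ i ∈ I, ∀ n ∈ S, |f i n| ≤ 1) (hε : 0 ≤ ε)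
    (hcorr : ∀ i ∈ I, ∀ j ∈ I, i ≠ j → |∑ n ∈ S, w n * (f i n * f j n)| ≤ ε) :
    ∑ n ∈ S, w n * (∑ i ∈ I, f i n) ^ 2 ≤ #I * W + (#I : ℝ) ^ 2 * ε := by
  classical
  have hdiag : ∀ i ∈ I, ∑ n ∈ S, w n * (f i n * f i n) ≤ W := fun i hi =>
    (sum_le_sum fun n hn => mul_le_of_le_one_right (hw n hn) <| by
      rw [← abs_mul_abs_self]
      exact mul_le_one₀ (hf i hi n hn) (abs_nonneg _) (hf i hi n hn)).trans hW
  calc ∑ n ∈ S, w n * (∑ i ∈ I, f i n) ^ 2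
      = ∑ i ∈ I, ∑ j ∈ I, ∑ n ∈ S, w n * (f i n * f j n) := by
        simp_rw [sq, sum_mul_sum, mul_sum]
        rw [sum_comm]
        exact sum_congr rfl fun i _ => sum_comm
    _ ≤ ∑ i ∈ I, ∑ j ∈ I, ((if i = j then W else 0) + ε) :=
        sum_le_sum fun i hi => sum_le_sum fun j hj => by
          split_ifs with hij
          · exact hij ▸ (hdiag i hi).trans (le_add_of_nonneg_right hε)
          · rw [zero_add]
            exact (le_abs_self _).trans (hcorr i hi j hj hij)
    _ = #I * W + (#I : ℝ) ^ 2 * ε := by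
        have hsum : ∑ i ∈ I, (if i ∈ I then W else 0) = #I * W := by
          rw [sum_congr rfl fun i hi => if_pos hi, sum_const, nsmul_eq_mul]
        simp only [sum_add_distrib, sum_ite_eq, hsum, sum_const, nsmul_eq_mul]
        ring

lemma sq_sum_sum_le_of_quasiorthogonal {P : Finset α} (hPS : P ⊆ S) (hwP : ∀ p ∈ P, w p = 1)
    (hw : ∀ n ∈ S, 0 ≤ w n) (hW : ∑ n ∈ S, w n ≤ W)
    (hf : ∀ i ∈ I, ∀ n ∈ S, |f i n| ≤ 1) (hε : 0 ≤ ε)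
    (hcorr : ∀ i ∈ I, ∀ j ∈ I, i ≠ j → |∑ n ∈ S, w n * (f i n * f j n)| ≤ ε) :
    (∑ i ∈ I, ∑ p ∈ P, f i p) ^ 2 ≤ W * (#I * W + (#I : ℝ) ^ 2 * ε) := by
  have hcard : (#P : ℝ) ≤ W := calc
    (#P : ℝ) = ∑ p ∈ P, w p := by rw [sum_congr rfl hwP, sum_const, nsmul_eq_mul, mul_one]
    _ ≤ ∑ n ∈ S, w n := sum_le_sum_of_subset_of_nonneg hPS fun n hn _ => hw n hn
    _ ≤ W := hW
  have hsq : ∑ p ∈ P, (∑ i ∈ I, f i p) ^ 2 ≤ #I * W + (#I : ℝ) ^ 2 * ε := calc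
    ∑ p ∈ P, (∑ i ∈ I, f i p) ^ 2 = ∑ p ∈ P, w p * (∑ i ∈ I, f i p) ^ 2 :=
        sum_congr rfl fun p hp => by rw [hwP p hp, one_mul]
    _ ≤ ∑ n ∈ S, w n * (∑ i ∈ I, f i n) ^ 2 :=
        sum_le_sum_of_subset_of_nonneg hPS fun n hn _ => mul_nonneg (hw n hn) (sq_nonneg _)
    _ ≤ #I * W + (#I : ℝ) ^ 2 * ε := sum_mul_sq_sum_le_of_quasiorthogonal hw hW hf hε hcorr
  rw [sum_comm]
  exact sq_sum_le_card_mul_sum_sq.trans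
    (mul_le_mul hcard hsq (sum_nonneg fun _ _ => sq_nonneg _) ((Nat.cast_nonneg _).trans hcard))

end QuasiOrthogonality

section DigitSums

lemma sum_filter_mem_Ioc_mul_ite {w f g : ℕ → ℝ} {A B A' B' X : ℕ} (hBX : B ≤ X) :
    ∑ n ∈ Ioc 0 X, w n * ((if n ∈ Ioc A B then f n else 0) * (if n ∈ Ioc A' B' then g n else 0)) =
      ∑ n ∈ Ioc (max A A') (min B B'), w n * (f n * g n) := by
  have hIoc : Ioc (max A A') (min B B') = {n ∈ Ioc 0 X | n ∈ Ioc A B ∧ n ∈ Ioc A' B'} := by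
    ext n
    simp only [mem_filter, mem_Ioc, max_lt_iff, le_min_iff]
    lia
  rw [hIoc, sum_filter]
  refine sum_congr rfl fun n _ => ?_
  rw [ite_zero_mul_ite_zero, mul_ite, mul_zero]

/-- The large sieve step: distinct moduli give nearly orthogonal digits, so the digit sums over
primes cancel on average over the moduli. -/
lemma sq_sum_sum_primes_crtDigit_le {b R Z X : ℕ} (hR : 2 ≤ R) {Q : Finset ℕ}
    (hQ : ∀ q ∈ Q, q.Prime ∧ ¬ q ∣ b ∧ q ≤ Z) {A B : ℕ → ℕ} (hA : ∀ q ∈ Q, R ≤ A q)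
    (hB : ∀ q ∈ Q, B q ≤ X) {φ : ∀ q, ZMod q → ℝ} (hφ : ∀ q ∈ Q, IsBalanced (φ q)) {W : ℝ}
    (hW : ∑ n ∈ Ioc 0 X, selbergWeight R 1 n ≤ W) :
    (∑ q ∈ Q, ∑ p ∈ Ioc (A q) (B q) with p.Prime, φ q (crtDigit b q p)) ^ 2 ≤
      W * (#Q * W + (#Q : ℝ) ^ 2 * (2 * (R : ℝ) ^ 6 * Z ^ 4)) := by
  let f : ℕ → ℕ → ℝ := fun q n => if n ∈ Ioc (A q) (B q) then φ q (crtDigit b q n) else 0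
  have hprimes : ∀ q ∈ Q, ∑ p ∈ Ioc (A q) (B q) with p.Prime, φ q (crtDigit b q p) =
      ∑ p ∈ Ioc R X with p.Prime, f q p := fun q hq => by
    have hAq := hA q hq
    have hBq := hB q hq
    rw [← sum_filter]
    refine sum_congr (ext fun p => ?_) fun _ _ => rfl
    simp only [mem_filter, mem_Ioc]
    lia
  rw [sum_congr rfl hprimes]
  refine sq_sum_sum_le_of_quasiorthogonal (S := Ioc 0 X) (w := selbergWeight R 1) ?_ ?_
    (fun n _ => selbergWeight_nonneg R 1 n) hW ?_ (by positivity) ?_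
  · exact (filter_subset _ _).trans (Ioc_subset_Ioc_left R.zero_le)
  · intro p hp
    rw [mem_filter, mem_Ioc] at hp
    exact selbergWeight_prime (by lia) hp.2 hp.1.1
  · intro q hq n _
    by_cases hn : n ∈ Ioc (A q) (B q)
    · simpa only [f, if_pos hn] using (hφ q hq).abs_le_one _
    · simp only [f, if_neg hn, abs_zero, zero_le_one]
  · intro q hq q' hq' hne
    obtain ⟨hprime, hqb, hqZ⟩ := hQ q hq
    obtain ⟨hprime', hqb', hqZ'⟩ := hQ q' hq'
    simp only [f]
    rw [sum_filter_mem_Ioc_mul_ite (hB q hq)]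
    exact abs_sum_selbergWeight_crtDigit_mul_le (by lia) hprime hprime' hqb hqb' hne hqZ hqZ'
      (hφ q hq) (hφ q' hq') _ _ _

end DigitSums

section Thresholds

/-- The proportion of the nonzero residues modulo `q` whose representative in `[1, q)` is less
than `m`. -/
noncomputable def thresholdMean (q m : ℕ) : ℝ := (min m q - 1 : ℕ) / (q - 1 : ℕ)

/-- The indicator of `{x | x.val < m}`, made balanced by subtracting its mean over the nonzero
residues and vanishing at `0`. -/
noncomputable def thresholdTest (q m : ℕ) (x : ZMod q) : ℝ :=
  if x = 0 then 0 else (if x.val < m then 1 else 0) - thresholdMean q m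

lemma thresholdMean_nonneg (q m : ℕ) : 0 ≤ thresholdMean q m := by
  unfold thresholdMean
  positivity

lemma thresholdMean_le_one (q m : ℕ) : thresholdMean q m ≤ 1 :=
  div_le_one_of_le₀ (Nat.cast_le.2 (by lia)) (Nat.cast_nonneg _)

lemma isBalanced_thresholdTest {q : ℕ} (hq : 2 ≤ q) (m : ℕ) : IsBalanced (thresholdTest q m) where
  map_zero := if_pos rfl
  abs_le_one x := by
    have hnonneg := thresholdMean_nonneg q m
    have hle := thresholdMean_le_one q m
    unfold thresholdTest
    split_ifs <;> rw [abs_le] <;> constructor <;> linarith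
  sum_eq_zero := by
    have hval : ∀ k ∈ Ico 1 q,
        thresholdTest q m (k : ZMod q) = (if k < m then 1 else 0) - thresholdMean q m := by
      intro k hk
      rw [mem_Ico] at hk
      have hk0 : (k : ZMod q) ≠ 0 := fun h => by
        have := Nat.le_of_dvd hk.1 ((ZMod.natCast_eq_zero_iff k q).1 h)
        lia
      rw [thresholdTest, if_neg hk0, ZMod.val_cast_of_lt hk.2]
    have hfilter : {k ∈ Ico 1 q | k < m} = Ico 1 (min m q) := by
      ext k
      simp only [mem_filter, mem_Ico]
      lia
    have hq1 : ((q - 1 : ℕ) : ℝ) ≠ 0 := Nat.cast_ne_zero.2 (by lia)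
    rw [range_eq_Ico, sum_eq_sum_Ico_succ_bot (by lia), Nat.cast_zero, thresholdTest, if_pos rfl,
      zero_add, zero_add, sum_congr rfl hval, sum_sub_distrib, sum_boole, hfilter, sum_const,
      Nat.card_Ico, Nat.card_Ico, nsmul_eq_mul, thresholdMean, mul_div_cancel₀ _ hq1, sub_self]

variable {q : ℕ} {r : ℝ}

lemma thresholdMean_floor_add_one_le (hq : 2 ≤ q) (hr : 0 ≤ r) :
    thresholdMean q (⌊r * q⌋₊ + 1) ≤ r + 2 / q := by
  have hq' : (2 : ℝ) ≤ q := by exact_mod_cast hq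
  have hle := thresholdMean_le_one q (⌊r * q⌋₊ + 1)
  have hcount : ((min (⌊r * q⌋₊ + 1) q - 1 : ℕ) : ℝ) ≤ r * q :=
    (Nat.cast_le.2 (by lia)).trans (Nat.floor_le (by positivity))
  have hmul : thresholdMean q (⌊r * q⌋₊ + 1) * (q - 1) ≤ r * q := by
    rwa [thresholdMean, Nat.cast_sub (by lia : 1 ≤ q), Nat.cast_one,
      div_mul_cancel₀ _ (by linarith)]
  calc thresholdMean q (⌊r * q⌋₊ + 1)
      = (thresholdMean q (⌊r * q⌋₊ + 1) * (q - 1) + thresholdMean q (⌊r * q⌋₊ + 1)) / q := by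
        field_simp
        ring
    _ ≤ (r * q + 2) / q := by
        gcongr
        linarith
    _ = r + 2 / q := by field_simp

lemma sub_two_div_le_thresholdMean_floor (hq : 2 ≤ q) (hr1 : r ≤ 1) :
    r - 2 / q ≤ thresholdMean q ⌊r * q⌋₊ := by
  have : (2 : ℝ) ≤ q := by exact_mod_cast hq
  have hfloor : ⌊r * q⌋₊ ≤ q := Nat.floor_le_of_le (by nlinarith)
  calc r - 2 / q = (r * q - 2) / q := by field_simp
    _ ≤ (min ⌊r * q⌋₊ q - 1 : ℕ) / q := by
        gcongr
        rw [min_eq_left hfloor, sub_le_iff_le_add]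
        refine (Nat.lt_floor_add_one (r * q)).le.trans ?_
        exact_mod_cast (by lia : ⌊r * q⌋₊ + 1 ≤ ⌊r * q⌋₊ - 1 + 2)
    _ ≤ thresholdMean q ⌊r * q⌋₊ := by
        unfold thresholdMean
        gcongr
        · exact_mod_cast (by lia : 0 < q - 1)
        · lia

/-- The term `(b ^ n mod n) / n` of the sequence under study. -/
noncomputable def powModRatio (b n : ℕ) : ℝ := (b ^ n % n : ℕ) / n

variable {b p : ℕ}

lemma powModRatio_mul (hp : p.Prime) (hq : q.Prime) (hbp : b ^ q < p) (hqp : q < p) :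
    powModRatio b (p * q) = ((b : ℝ) ^ q / p + (crtDigit b q p).val) / q := by
  have hp0 : (p : ℝ) ≠ 0 := Nat.cast_ne_zero.2 hp.ne_zero
  rw [powModRatio, pow_mul_mod_mul_eq_s17 hp hq hbp hqp]
  push_cast
  field_simp

lemma val_crtDigit_lt_of_powModRatio_le (hp : p.Prime) (hq : q.Prime) (hbp : b ^ q < p)
    (hqp : q < p) (h : powModRatio b (p * q) ≤ r) : (crtDigit b q p).val < ⌊r * q⌋₊ + 1 := by
  rw [powModRatio_mul hp hq hbp hqp, div_le_iff₀ (Nat.cast_pos.2 hq.pos)] at h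
  have : (0 : ℝ) ≤ (b : ℝ) ^ q / p := by positivity
  exact Nat.lt_succ_of_le (Nat.le_floor (by linarith))

lemma powModRatio_le_of_val_crtDigit_lt (hp : p.Prime) (hq : q.Prime) (hbp : b ^ q < p)
    (hqp : q < p) (hr : 0 ≤ r) (h : (crtDigit b q p).val < ⌊r * q⌋₊) :
    powModRatio b (p * q) ≤ r := by
  rw [powModRatio_mul hp hq hbp hqp, div_le_iff₀ (Nat.cast_pos.2 hq.pos)]
  have hfrac : (b : ℝ) ^ q / p ≤ 1 :=
    div_le_one_of_le₀ (by exact_mod_cast hbp.le) (Nat.cast_nonneg _)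
  have hfloor : ((crtDigit b q p).val + 1 : ℝ) ≤ r * q :=
    (by exact_mod_cast h : ((crtDigit b q p).val + 1 : ℝ) ≤ ⌊r * q⌋₊).trans
      (Nat.floor_le (by positivity))
  linarith

lemma indicator_powModRatio_sub_le (hp : p.Prime) (hq : q.Prime) (hbp : b ^ q < p) (hqp : q < p)
    (hr : 0 ≤ r) : (if powModRatio b (p * q) ≤ r then 1 else 0) - r ≤
      thresholdTest q (⌊r * q⌋₊ + 1) (crtDigit b q p) + 2 / q +
        if crtDigit b q p = 0 then 1 else 0 := by
  have hmean := thresholdMean_floor_add_one_le hq.two_le hr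
  have hlt := val_crtDigit_lt_of_powModRatio_le hp hq hbp hqp (r := r)
  have hq0 : (0 : ℝ) ≤ 2 / q := by positivity
  unfold thresholdTest
  split_ifs <;> first | linarith | exact absurd (hlt ‹_›) ‹_›

lemma le_indicator_powModRatio_sub (hp : p.Prime) (hq : q.Prime) (hbp : b ^ q < p) (hqp : q < p)
    (hr : 0 ≤ r) (hr1 : r ≤ 1) : thresholdTest q ⌊r * q⌋₊ (crtDigit b q p) - 2 / q -
      (if crtDigit b q p = 0 then 1 else 0) ≤ (if powModRatio b (p * q) ≤ r then 1 else 0) - r := by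
  have hmean := sub_two_div_le_thresholdMean_floor hq.two_le hr1
  have hle := powModRatio_le_of_val_crtDigit_lt hp hq hbp hqp hr
  have hq0 : (0 : ℝ) ≤ 2 / q := by positivity
  unfold thresholdTest
  split_ifs <;> first | linarith | exact absurd (hle ‹_›) ‹_›

end Thresholds

section Decomposition

/-- The primes up to `log₂ N`, among which the smaller prime factor of an element of `A_N` lies. -/
def smallPrimes (N : ℕ) : Finset ℕ := {q ∈ Icc 1 (Nat.log 2 N) | q.Prime}

/-- The primes `p > b ^ q` with `p * q ≤ N`: the larger prime factors of the elements of `A_N`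
with smaller factor `q`. -/
def cofactorPrimes (b N q : ℕ) : Finset ℕ := {p ∈ Ioc (b ^ q) (N / q) | p.Prime}

variable {b N q p : ℕ}

lemma mem_smallPrimes : q ∈ smallPrimes N ↔ q ≤ Nat.log 2 N ∧ q.Prime := by
  rw [smallPrimes, mem_filter, mem_Icc]
  exact ⟨fun h => ⟨h.1.2, h.2⟩, fun h => ⟨⟨h.2.pos, h.1⟩, h.2⟩⟩

lemma mem_cofactorPrimes : p ∈ cofactorPrimes b N q ↔ b ^ q < p ∧ p ≤ N / q ∧ p.Prime := by
  rw [cofactorPrimes, mem_filter, mem_Ioc, and_assoc]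

lemma lt_of_mem_cofactorPrimes (hb : 2 ≤ b) (hp : p ∈ cofactorPrimes b N q) : q < p :=
  (Nat.lt_pow_self hb).trans (mem_cofactorPrimes.1 hp).1

lemma mem_setAN_iff (hb : 2 ≤ b) {n : ℕ} :
    n ∈ setAN b N ↔ ∃ q ∈ smallPrimes N, ∃ p ∈ cofactorPrimes b N q, p * q = n := by
  simp only [setAN, mem_filter, mem_Icc, mem_smallPrimes, mem_cofactorPrimes]
  constructor
  · rintro ⟨⟨-, hle⟩, p, q, hp, hq, hbp, rfl⟩
    have hpow : 2 ^ q ≤ N := calc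
      2 ^ q ≤ b ^ q := Nat.pow_le_pow_left hb q
      _ ≤ p * q := hbp.le.trans (Nat.le_mul_of_pos_right p hq.pos)
      _ ≤ N := hle
    exact ⟨q, ⟨Nat.le_log_of_pow_le one_lt_two hpow, hq⟩, p,
      ⟨hbp, (Nat.le_div_iff_mul_le hq.pos).2 hle, hp⟩, rfl⟩
  · rintro ⟨q, ⟨-, hq⟩, p, ⟨hbp, hle, hp⟩, rfl⟩
    exact ⟨⟨Nat.mul_pos hp.pos hq.pos, (Nat.le_div_iff_mul_le hq.pos).1 hle⟩,
      p, q, hp, hq, hbp, rfl⟩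

lemma eq_and_eq_of_prime_mul_eq_mul {p q p' q' : ℕ} (hp : p.Prime) (hp' : p'.Prime)
    (hqp : q < p) (hq0 : 0 < q) (hqp' : q' < p') (hq0' : 0 < q') (h : p * q = p' * q') :
    p = p' ∧ q = q' := by
  have hpp' : p = p' := by
    rcases hp.dvd_mul.1 (h ▸ dvd_mul_right p q) with hd | hd
    · exact (Nat.prime_dvd_prime_iff_eq hp hp').1 hd
    rcases hp'.dvd_mul.1 (h ▸ dvd_mul_right p' q') with hd' | hd'
    · exact ((Nat.prime_dvd_prime_iff_eq hp' hp).1 hd').symm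
    · have := Nat.le_of_dvd hq0' hd
      have := Nat.le_of_dvd hq0 hd'
      lia
  subst hpp'
  exact ⟨rfl, Nat.eq_of_mul_eq_mul_left hp.pos h⟩

lemma card_filter_setAN (hb : 2 ≤ b) (N : ℕ) (P : ℕ → Prop) [DecidablePred P] :
    #{n ∈ setAN b N | P n} = ∑ q ∈ smallPrimes N, #{p ∈ cofactorPrimes b N q | P (p * q)} := by
  rw [← card_sigma]
  refine (card_bij (fun x _ => x.2 * x.1) ?_ ?_ ?_).symm
  · rintro ⟨q, p⟩ h
    rw [mem_sigma, mem_filter] at h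
    exact mem_filter.2 ⟨(mem_setAN_iff hb).2 ⟨q, h.1, p, h.2.1, rfl⟩, h.2.2⟩
  · rintro ⟨q, p⟩ h ⟨q', p'⟩ h' heq
    simp only [mem_sigma, mem_filter] at h h'
    obtain ⟨rfl, rfl⟩ := eq_and_eq_of_prime_mul_eq_mul (mem_cofactorPrimes.1 h.2.1).2.2
      (mem_cofactorPrimes.1 h'.2.1).2.2 (lt_of_mem_cofactorPrimes hb h.2.1)
      (mem_smallPrimes.1 h.1).2.pos (lt_of_mem_cofactorPrimes hb h'.2.1)
      (mem_smallPrimes.1 h'.1).2.pos heq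
    rfl
  · intro n hn
    rw [mem_filter, mem_setAN_iff hb] at hn
    obtain ⟨⟨q, hq, p, hp, rfl⟩, hP⟩ := hn
    exact ⟨⟨q, p⟩, mem_sigma.2 ⟨hq, mem_filter.2 ⟨hp, hP⟩⟩, rfl⟩

lemma card_setAN (hb : 2 ≤ b) (N : ℕ) :
    #(setAN b N) = ∑ q ∈ smallPrimes N, #(cofactorPrimes b N q) := by
  simpa only [filter_true] using card_filter_setAN hb N fun _ => True

/-- The deviation from uniformity of the terms with smaller prime factor `q`. -/
noncomputable def cofactorDeviation (b N q : ℕ) (r : ℝ) : ℝ :=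
  #{p ∈ cofactorPrimes b N q | powModRatio b (p * q) ≤ r} - r * #(cofactorPrimes b N q)

lemma card_powModRatio_le_sub_eq_sum (hb : 2 ≤ b) (N : ℕ) (r : ℝ) :
    (#{n ∈ setAN b N | powModRatio b n ≤ r} : ℝ) - r * #(setAN b N) =
      ∑ q ∈ smallPrimes N, cofactorDeviation b N q r := by
  rw [card_filter_setAN hb, card_setAN hb, Nat.cast_sum, Nat.cast_sum, mul_sum, ← sum_sub_distrib]
  rfl

variable {r : ℝ}

lemma cofactorDeviation_eq_sum : cofactorDeviation b N q r =
    ∑ p ∈ cofactorPrimes b N q, ((if powModRatio b (p * q) ≤ r then 1 else 0) - r) := by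
  rw [cofactorDeviation, sum_sub_distrib, sum_boole, sum_const, nsmul_eq_mul, mul_comm r]

lemma abs_cofactorDeviation_le_card (hr : 0 ≤ r) (hr1 : r ≤ 1) :
    |cofactorDeviation b N q r| ≤ #(cofactorPrimes b N q) := by
  have hle : (#{p ∈ cofactorPrimes b N q | powModRatio b (p * q) ≤ r} : ℝ) ≤
      #(cofactorPrimes b N q) := Nat.cast_le.2 (card_filter_le _ _)
  have hmul := mul_le_of_le_one_left (Nat.cast_nonneg (α := ℝ) #(cofactorPrimes b N q)) hr1
  have hmul0 : 0 ≤ r * #(cofactorPrimes b N q) := by positivity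
  rw [cofactorDeviation, abs_le]
  constructor <;> linarith [Nat.cast_nonneg (α := ℝ)
    #{p ∈ cofactorPrimes b N q | powModRatio b (p * q) ≤ r}]

lemma cofactorDeviation_le (hb : 2 ≤ b) (hq : q.Prime) (hr : 0 ≤ r) :
    cofactorDeviation b N q r ≤
      ∑ p ∈ cofactorPrimes b N q, thresholdTest q (⌊r * q⌋₊ + 1) (crtDigit b q p) +
        (2 / q * #(cofactorPrimes b N q) + #{p ∈ cofactorPrimes b N q | crtDigit b q p = 0}) := by
  rw [cofactorDeviation_eq_sum]
  refine (sum_le_sum fun p hp => indicator_powModRatio_sub_le (mem_cofactorPrimes.1 hp).2.2 hq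
    (mem_cofactorPrimes.1 hp).1 (lt_of_mem_cofactorPrimes hb hp) hr).trans_eq ?_
  rw [sum_add_distrib, sum_add_distrib, sum_boole, sum_const, nsmul_eq_mul, add_assoc,
    mul_comm (2 / (q : ℝ))]

lemma le_cofactorDeviation (hb : 2 ≤ b) (hq : q.Prime) (hr : 0 ≤ r) (hr1 : r ≤ 1) :
    ∑ p ∈ cofactorPrimes b N q, thresholdTest q ⌊r * q⌋₊ (crtDigit b q p) -
        (2 / q * #(cofactorPrimes b N q) + #{p ∈ cofactorPrimes b N q | crtDigit b q p = 0}) ≤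
      cofactorDeviation b N q r := by
  rw [cofactorDeviation_eq_sum]
  refine Eq.trans_le ?_ (sum_le_sum fun p hp => le_indicator_powModRatio_sub
    (mem_cofactorPrimes.1 hp).2.2 hq (mem_cofactorPrimes.1 hp).1
    (lt_of_mem_cofactorPrimes hb hp) hr hr1)
  rw [sum_sub_distrib, sum_sub_distrib, sum_boole, sum_const, nsmul_eq_mul, sub_sub,
    mul_comm (2 / (q : ℝ))]

lemma abs_card_powModRatio_le_sub_le (hb : 2 ≤ b) (hr : 0 ≤ r) (hr1 : r ≤ 1) {G : ℝ}
    (hG : ∀ m : ℕ → ℕ, |∑ q ∈ smallPrimes N with b < q,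
      ∑ p ∈ cofactorPrimes b N q, thresholdTest q (m q) (crtDigit b q p)| ≤ G) :
    |(#{n ∈ setAN b N | powModRatio b n ≤ r} : ℝ) - r * #(setAN b N)| ≤
      G + ∑ q ∈ smallPrimes N with b < q, 2 / (q : ℝ) * #(cofactorPrimes b N q) +
        ∑ q ∈ smallPrimes N with b < q, (#{p ∈ cofactorPrimes b N q | crtDigit b q p = 0} : ℝ) +
        ∑ q ∈ smallPrimes N with ¬ b < q, (#(cofactorPrimes b N q) : ℝ) := by
  have hprime : ∀ q ∈ smallPrimes N, q.Prime := fun q hq => (mem_smallPrimes.1 hq).2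
  have hupper := sum_le_sum fun q (hq : q ∈ {q ∈ smallPrimes N | b < q}) =>
    cofactorDeviation_le (N := N) hb (hprime q (mem_filter.1 hq).1) hr
  have hlower := sum_le_sum fun q (hq : q ∈ {q ∈ smallPrimes N | b < q}) =>
    le_cofactorDeviation (N := N) hb (hprime q (mem_filter.1 hq).1) hr hr1
  rw [sum_add_distrib, sum_add_distrib] at hupper
  rw [sum_sub_distrib, sum_add_distrib] at hlower
  have hsmall : |∑ q ∈ smallPrimes N with ¬ b < q, cofactorDeviation b N q r| ≤
      ∑ q ∈ smallPrimes N with ¬ b < q, (#(cofactorPrimes b N q) : ℝ) :=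
    (abs_sum_le_sum_abs _ _).trans (sum_le_sum fun q _ => abs_cofactorDeviation_le_card hr hr1)
  rw [card_powModRatio_le_sub_eq_sum hb, ← sum_filter_add_sum_filter_not _ (b < ·)]
  rw [abs_le] at hsmall ⊢
  have hGu := (abs_le.1 (hG fun q => ⌊r * q⌋₊ + 1)).2
  have hGl := (abs_le.1 (hG fun q => ⌊r * q⌋₊)).1
  constructor <;> linarith

end Decomposition

/-- `R` is a sieve level suited to the sequence up to `N`: a fixed power of `N` in size, yet small
enough that all remainders of the sieve are dominated by `N / log N`. -/
structure AdmissibleLevel (N R : ℕ) : Prop where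
  two_le : 2 ≤ R
  one_le_natLog : 1 ≤ Nat.log 2 N
  log_le : Real.log N ≤ 40 * Real.log R
  remainder_le : (R : ℝ) ^ 8 * (Nat.log 2 N : ℝ) ^ 10 ≤ N / Real.log N

namespace AdmissibleLevel

variable {N R : ℕ}

lemma log_pos (h : AdmissibleLevel N R) : 0 < Real.log N := by
  have hN : 2 ≤ N := by
    by_contra! hN
    have := Nat.log_of_lt hN
    have := h.one_le_natLog
    lia
  exact Real.log_pos (by exact_mod_cast hN)

lemma log_level_pos (h : AdmissibleLevel N R) : 0 < Real.log R := by
  linarith [h.log_pos, h.log_le]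

lemma scale_pos (h : AdmissibleLevel N R) : 0 < N / Real.log N :=
  div_pos (Nat.cast_pos.2 (Nat.pos_of_ne_zero (by rintro rfl; simpa using h.log_pos))) h.log_pos

lemma two_div_log_le (h : AdmissibleLevel N R) : 2 / Real.log R ≤ 80 / Real.log N := by
  rw [div_le_div_iff₀ h.log_level_pos h.log_pos]
  linarith [h.log_le]

lemma pow_mul_pow_le (h : AdmissibleLevel N R) {i j : ℕ} (hi : i ≤ 8) (hj : j ≤ 10) :
    (R : ℝ) ^ i * (Nat.log 2 N : ℝ) ^ j ≤ N / Real.log N := by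
  have hR : (1 : ℝ) ≤ R := by exact_mod_cast one_le_two.trans h.two_le
  have hL : (1 : ℝ) ≤ Nat.log 2 N := by exact_mod_cast h.one_le_natLog
  exact (by gcongr : _ ≤ (R : ℝ) ^ 8 * (Nat.log 2 N : ℝ) ^ 10).trans h.remainder_le

lemma pow_le_div (h : AdmissibleLevel N R) {i q : ℕ} (hi : i ≤ 8) (hq : 0 < q)
    (hqL : q ≤ Nat.log 2 N) : (R : ℝ) ^ i ≤ N / Real.log N / q := by
  rw [le_div_iff₀ (Nat.cast_pos.2 hq)]
  refine le_trans ?_ (h.pow_mul_pow_le hi (by norm_num : 1 ≤ 10))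
  rw [pow_one]
  gcongr

lemma sum_selbergWeight_le (h : AdmissibleLevel N R) {m : ℕ} (hm : 0 < m)
    (hmL : m ≤ Nat.log 2 N) :
    ∑ n ∈ Ioc 0 (N / m), selbergWeight R 1 n ≤ 81 * (N / Real.log N) / m := by
  have hlevel := h.log_level_pos
  calc ∑ n ∈ Ioc 0 (N / m), selbergWeight R 1 n
      ≤ (N / m : ℕ) * (2 / Real.log R) + (R : ℝ) ^ 4 := sum_selbergWeight_one_le _ h.two_le
    _ ≤ (N / m : ℝ) * (80 / Real.log N) + N / Real.log N / m := by
        gcongr ?_ * ?_ + ?_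
        · exact Nat.cast_div_le
        · exact h.two_div_log_le
        · exact h.pow_le_div (by norm_num) hm hmL
    _ = 81 * (N / Real.log N) / m := by ring

lemma card_primes_modEq_le (h : AdmissibleLevel N R) {q k v : ℕ} (hk : 1 ≤ k) {S : Finset ℕ}
    (hS : ∀ p ∈ S, p.Prime ∧ p ≤ N / q ∧ p ≡ v [MOD k]) :
    (#S : ℝ) ≤ 80 * (N / Real.log N) * ((1 + Real.log k) / (q * k)) + 2 * (R : ℝ) ^ 4 := by
  have hsub : S ⊆ Icc 1 R ∪ {p ∈ Ioc R (N / q) | p.Prime ∧ p ≡ v [MOD k]} := fun p hp => by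
    obtain ⟨hprime, hle, hmod⟩ := hS p hp
    simp only [mem_union, mem_filter, mem_Ioc, mem_Icc]
    rcases le_or_gt p R with hpR | hpR
    · exact .inl ⟨hprime.pos, hpR⟩
    · exact .inr ⟨⟨hpR, hle⟩, hprime, hmod⟩
  have hcard : (#S : ℝ) ≤ R + (#{p ∈ Ioc R (N / q) | p.Prime ∧ p ≡ v [MOD k]} : ℝ) := by
    have := (card_le_card hsub).trans (card_union_le _ _)
    rw [Nat.card_Icc, Nat.add_sub_cancel] at this
    exact_mod_cast this
  have hR : (R : ℝ) ≤ (R : ℝ) ^ 4 :=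
    le_self_pow₀ (by exact_mod_cast one_le_two.trans h.two_le) (by norm_num)
  have : 0 ≤ Real.log k := Real.log_natCast_nonneg k
  have hlevel := h.log_level_pos
  have hmain : ((N / q : ℕ) : ℝ) / k * (2 * (1 + Real.log k) / Real.log R) ≤
      80 * (N / Real.log N) * ((1 + Real.log k) / (q * k)) := calc
    _ = ((N / q : ℕ) : ℝ) / k * (2 / Real.log R * (1 + Real.log k)) := by ring
    _ ≤ (N / q : ℝ) / k * (80 / Real.log N * (1 + Real.log k)) := by
        gcongr ?_ / _ * (?_ * _)
        · exact Nat.cast_div_le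
        · exact h.two_div_log_le
    _ = 80 * (N / Real.log N) * ((1 + Real.log k) / (q * k)) := by
        rw [div_div]
        ring
  linarith [_root_.card_primes_modEq_le (N / q) v h.two_le hk]

lemma card_cofactorPrimes_le (h : AdmissibleLevel N R) (b : ℕ) {q : ℕ} (hq : q ∈ smallPrimes N) :
    (#(cofactorPrimes b N q) : ℝ) ≤ 82 * (N / Real.log N) / q := by
  obtain ⟨hqL, hprime⟩ := mem_smallPrimes.1 hq
  have hmem : ∀ p ∈ cofactorPrimes b N q, p.Prime ∧ p ≤ N / q ∧ p ≡ 1 [MOD 1] := fun p hp =>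
    ⟨(mem_cofactorPrimes.1 hp).2.2, (mem_cofactorPrimes.1 hp).2.1, Nat.modEq_one⟩
  have hcard := h.card_primes_modEq_le le_rfl hmem
  rw [Nat.cast_one, Real.log_one, add_zero, mul_one] at hcard
  calc (#(cofactorPrimes b N q) : ℝ)
      ≤ 80 * (N / Real.log N) * (1 / q) + 2 * (R : ℝ) ^ 4 := hcard
    _ ≤ 80 * (N / Real.log N) * (1 / q) + 2 * (N / Real.log N / q) := by
        gcongr
        exact h.pow_le_div (by norm_num) hprime.pos hqL
    _ = 82 * (N / Real.log N) / q := by ring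

lemma sum_two_div_mul_card_cofactorPrimes_le (h : AdmissibleLevel N R) (b : ℕ) {Q : Finset ℕ}
    (hQ : Q ⊆ smallPrimes N) :
    ∑ q ∈ Q, 2 / (q : ℝ) * #(cofactorPrimes b N q) ≤ 328 * (N / Real.log N) := by
  have hscale := h.scale_pos
  calc ∑ q ∈ Q, 2 / (q : ℝ) * #(cofactorPrimes b N q)
      ≤ ∑ q ∈ Q, 164 * (N / Real.log N) * ((q : ℝ) ^ 2)⁻¹ := sum_le_sum fun q hq => by
        calc 2 / (q : ℝ) * #(cofactorPrimes b N q)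
            ≤ 2 / (q : ℝ) * (82 * (N / Real.log N) / q) := by
              gcongr
              exact h.card_cofactorPrimes_le b (hQ hq)
          _ = 164 * (N / Real.log N) * ((q : ℝ) ^ 2)⁻¹ := by ring
    _ ≤ 164 * (N / Real.log N) * ∑ q ∈ Icc 1 (Nat.log 2 N), ((q : ℝ) ^ 2)⁻¹ := by
        rw [← mul_sum]
        gcongr
        exact hQ.trans (filter_subset _ _)
    _ ≤ 164 * (N / Real.log N) * 2 := by
        gcongr
        exact sum_inv_sq_le_two _
    _ = 328 * (N / Real.log N) := by ring

lemma sum_card_cofactorPrimes_le (h : AdmissibleLevel N R) (b : ℕ) :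
    ∑ q ∈ smallPrimes N with ¬ b < q, (#(cofactorPrimes b N q) : ℝ) ≤
      82 * b * (N / Real.log N) := by
  have hscale := h.scale_pos
  have hcard : (#{q ∈ smallPrimes N | ¬ b < q} : ℝ) ≤ b := by
    have hsub : {q ∈ smallPrimes N | ¬ b < q} ⊆ Icc 1 b := fun q hq => by
      rw [mem_filter, not_lt] at hq
      exact mem_Icc.2 ⟨(mem_smallPrimes.1 hq.1).2.pos, hq.2⟩
    simpa using card_le_card hsub
  calc ∑ q ∈ smallPrimes N with ¬ b < q, (#(cofactorPrimes b N q) : ℝ)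
      ≤ ∑ q ∈ smallPrimes N with ¬ b < q, 82 * (N / Real.log N) := sum_le_sum fun q hq => by
        have hq' := (mem_filter.1 hq).1
        exact (h.card_cofactorPrimes_le b hq').trans <| div_le_self (by positivity)
          (by exact_mod_cast (mem_smallPrimes.1 hq').2.one_le)
    _ = #{q ∈ smallPrimes N | ¬ b < q} * (82 * (N / Real.log N)) := by
        rw [sum_const, nsmul_eq_mul]
    _ ≤ b * (82 * (N / Real.log N)) := by gcongr
    _ = 82 * b * (N / Real.log N) := by ring

section Cancellation

variable {b : ℕ} {Q : Finset ℕ} {φ : ∀ q, ZMod q → ℝ}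

lemma abs_sum_cofactorPrimes_le_level_le (h : AdmissibleLevel N R) (hQ : Q ⊆ smallPrimes N)
    (hφ : ∀ q ∈ Q, IsBalanced (φ q)) :
    |∑ q ∈ Q, ∑ p ∈ cofactorPrimes b N q with ¬ R < p, φ q (crtDigit b q p)| ≤
      N / Real.log N := by
  have hinner : ∀ q ∈ Q,
      |∑ p ∈ cofactorPrimes b N q with ¬ R < p, φ q (crtDigit b q p)| ≤ R := fun q hq => by
    have hsub : {p ∈ cofactorPrimes b N q | ¬ R < p} ⊆ Icc 1 R := fun p hp => by
      rw [mem_filter, not_lt] at hp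
      exact mem_Icc.2 ⟨(mem_cofactorPrimes.1 hp.1).2.2.pos, hp.2⟩
    calc |∑ p ∈ cofactorPrimes b N q with ¬ R < p, φ q (crtDigit b q p)|
        ≤ ∑ p ∈ cofactorPrimes b N q with ¬ R < p, (1 : ℝ) :=
          (abs_sum_le_sum_abs _ _).trans (sum_le_sum fun p _ => (hφ q hq).abs_le_one _)
      _ = #{p ∈ cofactorPrimes b N q | ¬ R < p} := by rw [sum_const, nsmul_eq_mul, mul_one]
      _ ≤ R := by simpa using card_le_card hsub
  have hcard : #Q ≤ Nat.log 2 N := by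
    simpa using card_le_card (hQ.trans (filter_subset _ _))
  calc _ ≤ ∑ _q ∈ Q, (R : ℝ) := (abs_sum_le_sum_abs _ _).trans (sum_le_sum hinner)
    _ = (R : ℝ) ^ 1 * (#Q : ℝ) ^ 1 := by rw [sum_const, nsmul_eq_mul]; ring
    _ ≤ (R : ℝ) ^ 1 * (Nat.log 2 N : ℝ) ^ 1 := by gcongr
    _ ≤ N / Real.log N := h.pow_mul_pow_le (by norm_num) (by norm_num)

lemma abs_sum_dyadic_le (h : AdmissibleLevel N R) (hQ : Q ⊆ smallPrimes N) (hbQ : ∀ q ∈ Q, b < q)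
    (hb : 0 < b) (hφ : ∀ q ∈ Q, IsBalanced (φ q)) {i : ℕ} (hi : ∀ q ∈ Q, Nat.log 2 q = i) :
    |∑ q ∈ Q, ∑ p ∈ Ioc (max (b ^ q) R) (N / q) with p.Prime, φ q (crtDigit b q p)| ≤
      83 * (N / Real.log N) * (3 / 4) ^ i := by
  have hscale := h.scale_pos
  rcases Q.eq_empty_or_nonempty with rfl | ⟨q₀, hq₀⟩
  · rw [sum_empty, abs_zero]
    positivity
  have hprime : ∀ q ∈ Q, q ≤ Nat.log 2 N ∧ q.Prime := fun q hq => mem_smallPrimes.1 (hQ hq)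
  have hmem : ∀ q ∈ Q, 2 ^ i ≤ q ∧ q < 2 ^ (i + 1) := fun q hq => by
    rw [← hi q hq]
    exact ⟨Nat.pow_log_le_self 2 (hprime q hq).2.ne_zero, Nat.lt_pow_succ_log_self one_lt_two q⟩
  have hiL : 2 ^ i ≤ Nat.log 2 N := (hmem q₀ hq₀).1.trans (hprime q₀ hq₀).1
  have hcard : #Q ≤ 2 ^ i := by
    have := card_le_card fun q hq => mem_Ico.2 (hmem q hq)
    rw [Nat.card_Ico, pow_succ] at this
    lia
  have hcard' : (#Q : ℝ) ≤ 2 ^ i := by exact_mod_cast hcard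
  have hcardL : (#Q : ℝ) ≤ Nat.log 2 N := by exact_mod_cast hcard.trans hiL
  have hW := h.sum_selbergWeight_le (by positivity) hiL
  rw [Nat.cast_pow, Nat.cast_ofNat] at hW
  refine abs_le_of_sq_le_sq ((sq_sum_sum_primes_crtDigit_le h.two_le
    (fun q hq => ⟨(hprime q hq).2, Nat.not_dvd_of_pos_of_lt hb (hbQ q hq), (hprime q hq).1⟩)
    (fun q _ => le_max_right _ _) (fun q hq => Nat.div_le_div_left (hmem q hq).1 (by positivity))
    hφ hW).trans ?_) (by positivity)
  calc _ ≤ 81 * (N / Real.log N) / 2 ^ i * (2 ^ i * (81 * (N / Real.log N) / 2 ^ i) +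
          (Nat.log 2 N : ℝ) ^ 2 * (2 * (R : ℝ) ^ 6 * (Nat.log 2 N : ℝ) ^ 4)) := by gcongr
    _ = 81 * (N / Real.log N) / 2 ^ i *
          (81 * (N / Real.log N) + 2 * ((R : ℝ) ^ 6 * (Nat.log 2 N : ℝ) ^ 6)) := by
        rw [mul_div_cancel₀ _ (by positivity)]
        ring
    _ ≤ 83 * (N / Real.log N) / 2 ^ i * (81 * (N / Real.log N) + 2 * (N / Real.log N)) := by
        gcongr
        · norm_num
        · exact h.pow_mul_pow_le (by norm_num) (by norm_num)
    _ = (83 * (N / Real.log N)) ^ 2 * (1 / 2) ^ i := by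
        rw [one_div_pow]
        ring
    _ ≤ (83 * (N / Real.log N)) ^ 2 * ((3 / 4) ^ 2) ^ i := by
        gcongr
        norm_num
    _ = (83 * (N / Real.log N) * (3 / 4) ^ i) ^ 2 := by
        rw [← pow_mul]
        ring

lemma abs_sum_crtDigit_le (h : AdmissibleLevel N R) (hQ : Q ⊆ smallPrimes N)
    (hbQ : ∀ q ∈ Q, b < q) (hb : 0 < b) (hφ : ∀ q ∈ Q, IsBalanced (φ q)) :
    |∑ q ∈ Q, ∑ p ∈ cofactorPrimes b N q, φ q (crtDigit b q p)| ≤ 333 * (N / Real.log N) := by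
  have hscale := h.scale_pos
  have hsplit : ∀ q, {p ∈ cofactorPrimes b N q | R < p} =
      {p ∈ Ioc (max (b ^ q) R) (N / q) | p.Prime} := fun q => by
    ext p
    simp only [cofactorPrimes, mem_filter, mem_Ioc, max_lt_iff]
    tauto
  have hlarge : |∑ q ∈ Q, ∑ p ∈ Ioc (max (b ^ q) R) (N / q) with p.Prime, φ q (crtDigit b q p)| ≤
      332 * (N / Real.log N) := by
    rw [← sum_fiberwise_of_maps_to (s := Q) (t := Q.image (Nat.log 2))
      fun q hq => mem_image_of_mem _ hq]
    calc _ ≤ ∑ i ∈ Q.image (Nat.log 2), 83 * (N / Real.log N) * (3 / 4 : ℝ) ^ i :=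
          (abs_sum_le_sum_abs _ _).trans <| sum_le_sum fun i _ =>
            h.abs_sum_dyadic_le ((filter_subset _ _).trans hQ)
              (fun q hq => hbQ q (mem_filter.1 hq).1) hb (fun q hq => hφ q (mem_filter.1 hq).1)
              fun q hq => (mem_filter.1 hq).2
      _ ≤ 83 * (N / Real.log N) * (1 - 3 / 4)⁻¹ := by
          rw [← mul_sum]
          gcongr
          rw [← tsum_geometric_of_lt_one (by norm_num) (by norm_num : (3 / 4 : ℝ) < 1)]
          exact (summable_geometric_of_lt_one (by norm_num) (by norm_num)).sum_le_tsum _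
            fun i _ => by positivity
      _ = 332 * (N / Real.log N) := by ring
  simp only [← sum_filter_add_sum_filter_not (cofactorPrimes b N _) (R < ·), hsplit,
    sum_add_distrib]
  exact (abs_add_le _ _).trans <|
    (add_le_add hlarge (h.abs_sum_cofactorPrimes_le_level_le hQ hφ)).trans_eq (by ring)

end Cancellation

end AdmissibleLevel

section MultiplicativeOrders

variable {b q : ℕ}

lemma natCast_zmod_ne_zero_of_lt (hb : 0 < b) (hbq : b < q) : (b : ZMod q) ≠ 0 :=
  mt (ZMod.natCast_eq_zero_iff b q).1 (Nat.not_dvd_of_pos_of_lt hb hbq)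

lemma orderOf_natCast_zmod_pos (hq : q.Prime) (hb : 0 < b) (hbq : b < q) :
    0 < orderOf (b : ZMod q) := by
  have := Fact.mk hq
  exact Nat.pos_of_dvd_of_pos (ZMod.orderOf_dvd_card_sub_one (natCast_zmod_ne_zero_of_lt hb hbq))
    (Nat.sub_pos_of_lt hq.one_lt)

lemma sum_inv_le_two_add_log {T : Finset ℕ} (hT : 0 ∉ T) {d : ℕ} (hcard : #T ≤ d) :
    ∑ i ∈ T, (i : ℝ)⁻¹ ≤ 2 + Real.log d := by
  rw [← sum_filter_add_sum_filter_not T (· ≤ d)]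
  have hsmall : ∑ i ∈ T with i ≤ d, (i : ℝ)⁻¹ ≤ 1 + Real.log d := by
    refine le_trans ?_ (sum_inv_le_one_add_log d)
    gcongr
    intro i hi
    rw [mem_filter] at hi
    exact mem_Icc.2 ⟨Nat.pos_of_ne_zero fun h => hT (h ▸ hi.1), hi.2⟩
  have hlarge : ∑ i ∈ T with ¬ i ≤ d, (i : ℝ)⁻¹ ≤ 1 := by
    rcases d.eq_zero_or_pos with rfl | hd
    · simp [card_eq_zero.1 (Nat.le_zero.1 hcard)]
    calc ∑ i ∈ T with ¬ i ≤ d, (i : ℝ)⁻¹ ≤ ∑ i ∈ T with ¬ i ≤ d, (d : ℝ)⁻¹ :=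
          sum_le_sum fun i hi => by
            have := (mem_filter.1 hi).2
            gcongr
            lia
      _ = #{i ∈ T | ¬ i ≤ d} * (d : ℝ)⁻¹ := by rw [sum_const, nsmul_eq_mul]
      _ ≤ d * (d : ℝ)⁻¹ := by
          gcongr
          exact (card_filter_le _ _).trans hcard
      _ = 1 := mul_inv_cancel₀ (Nat.cast_ne_zero.2 hd.ne')
  linarith

variable {d : ℕ} {S : Finset ℕ}

/-- All these primes divide `b ^ d - 1`. -/
lemma card_le_of_orderOf_eq (hb : 2 ≤ b) (hd : 0 < d)
    (hS : ∀ q ∈ S, q.Prime ∧ b < q ∧ orderOf (b : ZMod q) = d) : #S ≤ d := by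
  have hdvd : ∏ q ∈ S, q ∣ b ^ d - 1 := by
    refine prod_primes_dvd _ (fun q hq => (hS q hq).1.prime) fun q hq => ?_
    rw [← ZMod.natCast_eq_zero_iff, Nat.cast_sub (Nat.one_le_pow _ _ (by lia)), Nat.cast_pow,
      ← (hS q hq).2.2, pow_orderOf_eq_one, Nat.cast_one, sub_self]
  have hpow : b ^ #S ≤ b ^ d := calc
    b ^ #S = ∏ _q ∈ S, b := (prod_const b).symm
    _ ≤ ∏ q ∈ S, q := prod_le_prod' fun q hq => (hS q hq).2.1.le
    _ ≤ b ^ d - 1 := Nat.le_of_dvd (Nat.sub_pos_of_lt (Nat.one_lt_pow hd.ne' hb)) hdvd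
    _ ≤ b ^ d := Nat.sub_le _ _
  exact (Nat.pow_le_pow_iff_right hb).1 hpow

lemma sum_inv_le_of_orderOf_eq (hb : 2 ≤ b) (hd : 0 < d)
    (hS : ∀ q ∈ S, q.Prime ∧ b < q ∧ orderOf (b : ZMod q) = d) :
    ∑ q ∈ S, (q : ℝ)⁻¹ ≤ (2 + Real.log d) / d := by
  have hquot : ∀ q ∈ S, q = d * ((q - 1) / d) + 1 ∧ 0 < (q - 1) / d := fun q hq => by
    obtain ⟨hprime, hbq, rfl⟩ := hS q hq
    have := Fact.mk hprime
    have hdvd := ZMod.orderOf_dvd_card_sub_one (natCast_zmod_ne_zero_of_lt (by lia) hbq)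
    have := hprime.two_le
    exact ⟨by rw [Nat.mul_div_cancel' hdvd]; lia,
      Nat.div_pos (Nat.le_of_dvd (by lia) hdvd) hd⟩
  have hinj : Set.InjOn (fun q => (q - 1) / d) S := fun q hq q' hq' heq => by
    dsimp only at heq
    rw [(hquot q hq).1, (hquot q' hq').1, heq]
  have himage : 0 ∉ S.image fun q => (q - 1) / d := fun h => by
    obtain ⟨q, hq, hzero⟩ := mem_image.1 h
    exact (hquot q hq).2.ne' hzero
  calc ∑ q ∈ S, (q : ℝ)⁻¹ ≤ ∑ q ∈ S, (((q - 1) / d : ℕ) : ℝ)⁻¹ / d := sum_le_sum fun q hq => by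
        obtain ⟨heq, hpos⟩ := hquot q hq
        rw [div_eq_mul_inv, ← mul_inv, mul_comm]
        gcongr
        exact_mod_cast (Nat.le_succ _).trans heq.ge
    _ = (∑ i ∈ S.image fun q => (q - 1) / d, (i : ℝ)⁻¹) / d := by
        rw [← sum_div, sum_image hinj]
    _ ≤ (2 + Real.log d) / d := by
        gcongr
        exact sum_inv_le_two_add_log himage
          (card_image_le.trans (card_le_of_orderOf_eq hb hd hS))

lemma log_div_mul_log_div_le (hd : 0 < d) :
    (1 + Real.log d) / d * ((2 + Real.log d) / d) ≤ 36 / (d : ℝ) ^ (3 / 2 : ℝ) := by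
  have hd1 : (1 : ℝ) ≤ d := by exact_mod_cast hd
  have hroot : 1 ≤ (d : ℝ) ^ (1 / 4 : ℝ) := Real.one_le_rpow hd1 (by norm_num)
  have hlog : Real.log d ≤ 4 * (d : ℝ) ^ (1 / 4 : ℝ) :=
    (Real.log_le_rpow_div d.cast_nonneg (by norm_num : (0 : ℝ) < 1 / 4)).trans_eq (by ring)
  have := Real.log_nonneg hd1
  have hsq : (d : ℝ) ^ 2 = (d : ℝ) ^ (1 / 4 : ℝ) * (d : ℝ) ^ (1 / 4 : ℝ) *
      (d : ℝ) ^ (3 / 2 : ℝ) := by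
    rw [← Real.rpow_add (by linarith), ← Real.rpow_add (by linarith), ← Real.rpow_natCast]
    norm_num
  calc (1 + Real.log d) / d * ((2 + Real.log d) / d)
      ≤ 6 * (d : ℝ) ^ (1 / 4 : ℝ) / d * (6 * (d : ℝ) ^ (1 / 4 : ℝ) / d) := by
        gcongr <;> linarith
    _ = 36 * ((d : ℝ) ^ (1 / 4 : ℝ) * (d : ℝ) ^ (1 / 4 : ℝ)) / (d : ℝ) ^ 2 := by ring
    _ = 36 / (d : ℝ) ^ (3 / 2 : ℝ) := by
        rw [hsq]
        field_simp

/-- A bound for `∑ (1 + log d) / (q d)` over the primes `q > b`, with `d` the order of `b` modulo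
`q`; it does not depend on `b`. -/
noncomputable def orderSumBound : ℝ := ∑' d : ℕ, 36 / (d : ℝ) ^ (3 / 2 : ℝ)

lemma orderSumBound_nonneg : 0 ≤ orderSumBound := tsum_nonneg fun d => by positivity

lemma sum_log_orderOf_div_le (hb : 2 ≤ b) (hS : ∀ q ∈ S, q.Prime ∧ b < q) :
    ∑ q ∈ S, (1 + Real.log (orderOf (b : ZMod q))) / (q * orderOf (b : ZMod q)) ≤
      orderSumBound := by
  have hsummable : Summable fun d : ℕ => 36 / (d : ℝ) ^ (3 / 2 : ℝ) := by
    simpa only [mul_one_div] using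
      (Real.summable_one_div_nat_rpow.2 (by norm_num : (1 : ℝ) < 3 / 2)).mul_left 36
  rw [← sum_fiberwise_of_maps_to (s := S) (t := S.image fun q => orderOf (b : ZMod q))
    fun q hq => mem_image_of_mem _ hq]
  refine (sum_le_sum fun d hd => ?_).trans
    (hsummable.sum_le_tsum _ fun d _ => by positivity)
  obtain ⟨q₀, hq₀, hd⟩ := mem_image.1 hd
  have hdpos : 0 < d :=
    hd ▸ orderOf_natCast_zmod_pos (hS q₀ hq₀).1 (by lia) (hS q₀ hq₀).2
  have : 0 ≤ Real.log d := Real.log_natCast_nonneg d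
  calc ∑ q ∈ S with orderOf (b : ZMod q) = d,
        (1 + Real.log (orderOf (b : ZMod q))) / (q * orderOf (b : ZMod q))
      = (1 + Real.log d) / d * ∑ q ∈ S with orderOf (b : ZMod q) = d, (q : ℝ)⁻¹ := by
        rw [mul_sum]
        refine sum_congr rfl fun q hq => ?_
        rw [(mem_filter.1 hq).2, mul_comm (q : ℝ), ← div_div, div_eq_mul_inv _ (q : ℝ)]
    _ ≤ (1 + Real.log d) / d * ((2 + Real.log d) / d) := by
        gcongr
        refine sum_inv_le_of_orderOf_eq hb hdpos fun q hq => ?_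
        rw [mem_filter] at hq
        exact ⟨(hS q hq.1).1, (hS q hq.1).2, hq.2⟩
    _ ≤ 36 / (d : ℝ) ^ (3 / 2 : ℝ) := log_div_mul_log_div_le hdpos

lemma modEq_one_of_crtDigit_eq_zero [Fact q.Prime] (hqb : ¬ q ∣ b) {p : ℕ} (hqp : ¬ q ∣ p)
    (h : crtDigit b q p = 0) : p ≡ 1 [MOD orderOf (b : ZMod q)] := by
  have hb0 : (b : ZMod q) ≠ 0 := mt (ZMod.natCast_eq_zero_iff b q).1 hqb
  have hp : 1 ≤ p := Nat.pos_of_ne_zero fun hp => hqp (hp ▸ dvd_zero q)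
  have hpow : (b : ZMod q) ^ p = b := sub_eq_zero.1 <| (mul_eq_zero.1 h).resolve_right <|
    inv_ne_zero (mt (ZMod.natCast_eq_zero_iff p q).1 hqp)
  have hpow' : (b : ZMod q) ^ (p - 1) = 1 := mul_right_cancel₀ hb0 <| by
    rw [← pow_succ, Nat.sub_add_cancel hp, hpow, one_mul]
  exact ((Nat.modEq_iff_dvd' hp).2 (orderOf_dvd_of_pow_eq_one hpow')).symm

lemma AdmissibleLevel.sum_card_crtDigit_eq_zero_le {N R : ℕ} (h : AdmissibleLevel N R)
    (hb : 2 ≤ b) {Q : Finset ℕ} (hQ : Q ⊆ smallPrimes N) (hbQ : ∀ q ∈ Q, b < q) :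
    ∑ q ∈ Q, (#{p ∈ cofactorPrimes b N q | crtDigit b q p = 0} : ℝ) ≤
      (80 * orderSumBound + 2) * (N / Real.log N) := by
  have hprime : ∀ q ∈ Q, q.Prime := fun q hq => (mem_smallPrimes.1 (hQ hq)).2
  have hscale := h.scale_pos
  have hcard : #Q ≤ Nat.log 2 N := by
    simpa using card_le_card (hQ.trans (filter_subset _ _))
  have hterm : ∀ q ∈ Q, (#{p ∈ cofactorPrimes b N q | crtDigit b q p = 0} : ℝ) ≤
      80 * (N / Real.log N) * ((1 + Real.log (orderOf (b : ZMod q))) /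
        (q * orderOf (b : ZMod q))) + 2 * (R : ℝ) ^ 4 := fun q hq => by
    have := Fact.mk (hprime q hq)
    refine h.card_primes_modEq_le (v := 1)
      (orderOf_natCast_zmod_pos (hprime q hq) (by lia) (hbQ q hq)) fun p hp => ?_
    obtain ⟨hp, hdigit⟩ := mem_filter.1 hp
    obtain ⟨-, hpN, hpprime⟩ := mem_cofactorPrimes.1 hp
    have hqp : ¬ q ∣ p := fun hdvd => (lt_of_mem_cofactorPrimes hb hp).ne
      ((Nat.prime_dvd_prime_iff_eq (hprime q hq) hpprime).1 hdvd)
    exact ⟨hpprime, hpN, modEq_one_of_crtDigit_eq_zero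
      (Nat.not_dvd_of_pos_of_lt (by lia) (hbQ q hq)) hqp hdigit⟩
  calc _ ≤ 80 * (N / Real.log N) * ∑ q ∈ Q, (1 + Real.log (orderOf (b : ZMod q))) /
        (q * orderOf (b : ZMod q)) + 2 * ((R : ℝ) ^ 4 * (#Q : ℝ) ^ 1) := by
        refine (sum_le_sum hterm).trans_eq ?_
        rw [sum_add_distrib, ← mul_sum, sum_const, nsmul_eq_mul]
        ring
    _ ≤ 80 * (N / Real.log N) * orderSumBound + 2 * (N / Real.log N) := by
        gcongr ?_ * ?_ + _ * ?_
        · exact sum_log_orderOf_div_le hb fun q hq => ⟨hprime q hq, hbQ q hq⟩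
        · refine le_trans ?_ (h.pow_mul_pow_le (by norm_num : 4 ≤ 8) (by norm_num : 1 ≤ 10))
          gcongr
    _ = (80 * orderSumBound + 2) * (N / Real.log N) := by ring

end MultiplicativeOrders

section LowerBound

variable {b N q : ℕ}

lemma sieveMass_one_le_prod (R : ℕ) :
    sieveMass R 1 ≤ ∏ p ∈ Icc 1 R with p.Prime, (1 + (p : ℝ)⁻¹) := by
  have hinj : Set.InjOn Nat.primeFactors (sieveSupport R 1 : Set ℕ) := fun l hl m hm hlm => by
    rw [← Nat.prod_primeFactors_of_squarefree (mem_sieveSupport.1 hl).2.1,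
      ← Nat.prod_primeFactors_of_squarefree (mem_sieveSupport.1 hm).2.1, hlm]
  have hinv : ∀ l ∈ sieveSupport R 1, (l : ℝ)⁻¹ = ∏ p ∈ l.primeFactors, (p : ℝ)⁻¹ :=
    fun l hl => by
      rw [prod_inv_distrib, ← Nat.cast_prod,
        Nat.prod_primeFactors_of_squarefree (mem_sieveSupport.1 hl).2.1]
  have hsub : (sieveSupport R 1).image Nat.primeFactors ⊆ {p ∈ Icc 1 R | p.Prime}.powerset :=
    image_subset_iff.2 fun l hl => mem_powerset.2 fun p hp =>
      have hprime := Nat.prime_of_mem_primeFactors hp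
      mem_filter.2 ⟨mem_Icc.2 ⟨hprime.one_le,
        (Nat.le_of_mem_primeFactors hp).trans (mem_sieveSupport.1 hl).1.2⟩, hprime⟩
  rw [prod_one_add, sieveMass, sum_congr rfl hinv,
    ← sum_image (f := fun t : Finset ℕ => ∏ p ∈ t, (p : ℝ)⁻¹) hinj]
  exact sum_le_sum_of_subset_of_nonneg hsub fun _ _ _ => by positivity

lemma log_half_log_le_sum_inv_primes {y : ℕ} (hy : 2 ≤ y) :
    Real.log (Real.log y / 2) ≤ ∑ q ∈ Icc 1 y with q.Prime, (q : ℝ)⁻¹ := by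
  have hlog : 0 < Real.log y := Real.log_pos (by exact_mod_cast hy)
  rw [Real.log_le_iff_le_exp (by positivity), Real.exp_sum]
  calc Real.log y / 2 ≤ sieveMass y 1 := by
        linarith [log_le_sum_inv (one_le_two.trans hy), sum_inv_le_two_mul_sieveMass y]
    _ ≤ ∏ p ∈ Icc 1 y with p.Prime, (1 + (p : ℝ)⁻¹) := sieveMass_one_le_prod y
    _ ≤ ∏ p ∈ Icc 1 y with p.Prime, Real.exp (p : ℝ)⁻¹ := by
        gcongr with p
        exact (add_comm _ _).trans_le (Real.add_one_le_exp _)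

lemma eventually_half_le_primeCounting_mul_log :
    ∀ᶠ n : ℕ in Filter.atTop, (n : ℝ) / 2 ≤ n.primeCounting * Real.log n := by
  have hlittle : ∀ᶠ n : ℕ in Filter.atTop, ‖Real.log (n + 1)‖ ≤ 1 / 20 * ‖(n + 1 : ℝ)‖ :=
    (Filter.tendsto_atTop_add_const_right _ 1 tendsto_natCast_atTop_atTop).eventually
      (Real.isLittleO_log_id_atTop.bound (by norm_num))
  filter_upwards [hlittle, Filter.eventually_ge_atTop 2] with n hn h2
  have h2' : (2 : ℝ) ≤ n := by exact_mod_cast h2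
  have hcheb := Chebyshev.pi_ge n
  rw [div_le_iff₀ (Real.log_pos (by linarith))] at hcheb
  rw [Real.norm_of_nonneg (Real.log_nonneg (by linarith)), Real.norm_of_nonneg (by positivity)]
    at hn
  nlinarith [Real.log_two_gt_d9]

lemma primeCounting_le_card_cofactorPrimes_add (b N q : ℕ) :
    (N / q).primeCounting ≤ #(cofactorPrimes b N q) + b ^ q := by
  rw [Nat.primeCounting, Nat.primeCounting', Nat.count_eq_card_filter_range]
  have hsub : {p ∈ range (N / q + 1) | p.Prime} ⊆ cofactorPrimes b N q ∪ Icc 1 (b ^ q) :=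
    fun p hp => by
      obtain ⟨hle, hp⟩ := mem_filter.1 hp
      have := hp.pos
      simp only [mem_range, mem_union, mem_cofactorPrimes, mem_Icc, hp] at hle ⊢
      lia
  simpa using (card_le_card hsub).trans (card_union_le _ _)

lemma pow_mul_self_le_sqrt (hb : 2 ≤ b) (hN : N ≠ 0) (hq : q ≤ Nat.log b N / 4) :
    (b : ℝ) ^ q * q ≤ √N := by
  refine Real.le_sqrt_of_sq_le ?_
  have hpow : (b ^ q * q) ^ 2 ≤ N := calc
    (b ^ q * q) ^ 2 ≤ (b ^ q * b ^ q) ^ 2 := by gcongr; exact (Nat.lt_pow_self hb).le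
    _ = b ^ (q * 4) := by ring
    _ ≤ N := Nat.pow_le_of_le_log hN (by lia)
  exact_mod_cast hpow

lemma half_div_le_natDiv (hq : 0 < q) (hqN : q ≤ N) : (N : ℝ) / q / 2 ≤ (N / q : ℕ) := by
  have hdiv : 0 < N / q := Nat.div_pos hqN hq
  have hlt := Nat.lt_mul_div_succ N hq
  have hle : N ≤ N / q * (q * 2) := by nlinarith
  rw [div_div, div_le_iff₀ (by positivity)]
  exact_mod_cast hle

lemma le_card_cofactorPrimes (hb : 2 ≤ b) (hq : q.Prime) (hqN : q ≤ Nat.log b N / 4)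
    (hlog : Real.log N ≤ √N / 8)
    (hpi : ((N / q : ℕ) : ℝ) / 2 ≤ (N / q).primeCounting * Real.log (N / q : ℕ)) :
    N / Real.log N / 8 * (q : ℝ)⁻¹ ≤ #(cofactorPrimes b N q) := by
  have hq0 : (0 : ℝ) < q := Nat.cast_pos.2 hq.pos
  have hN0 : N ≠ 0 := by
    rintro rfl
    simp only [Nat.log_zero_right, Nat.zero_div, nonpos_iff_eq_zero] at hqN
    exact hq.ne_zero hqN
  have hqle : q ≤ N := by have := Nat.log_le_self b N; lia
  have hdiv : 0 < N / q := Nat.div_pos hqle hq.pos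
  have hlogN : 0 < Real.log N := Real.log_pos (by exact_mod_cast hq.one_lt.trans_le hqle)
  have hfloor : (N : ℝ) / q / 4 ≤ ((N / q : ℕ) : ℝ) / 2 := by
    linarith [half_div_le_natDiv hq.pos hqle]
  have hcount : ((N / q).primeCounting : ℝ) ≤ #(cofactorPrimes b N q) + (b : ℝ) ^ q := by
    exact_mod_cast primeCounting_le_card_cofactorPrimes_add b N q
  have hupper : (N : ℝ) / q / 4 ≤ (#(cofactorPrimes b N q) + (b : ℝ) ^ q) * Real.log N :=
    (hfloor.trans hpi).trans (by gcongr; exact Nat.div_le_self N q)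
  have hsmall : (b : ℝ) ^ q * Real.log N ≤ N / q / 8 := by
    rw [div_div, le_div_iff₀ (by positivity)]
    calc (b : ℝ) ^ q * Real.log N * (q * 8) = (b : ℝ) ^ q * q * (8 * Real.log N) := by ring
      _ ≤ √N * √N := by
          gcongr
          · exact pow_mul_self_le_sqrt hb hN0 hqN
          · linarith
      _ = N := Real.mul_self_sqrt (Nat.cast_nonneg N)
  calc N / Real.log N / 8 * (q : ℝ)⁻¹ = N / q / 8 / Real.log N := by ring
    _ ≤ _ := by
      rw [div_le_iff₀ hlogN]
      linarith

lemma eventually_log_le_mul_rpow {c s : ℝ} (hc : 0 < c) (hs : 0 < s) :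
    ∀ᶠ N : ℕ in Filter.atTop, Real.log N ≤ c * (N : ℝ) ^ s := by
  have hlittle := tendsto_natCast_atTop_atTop.eventually
    ((isLittleO_log_rpow_atTop hs).bound hc)
  filter_upwards [hlittle] with N hN
  rwa [Real.norm_of_nonneg (Real.log_natCast_nonneg N), Real.norm_of_nonneg (by positivity)] at hN

lemma eventually_le_card_cofactorPrimes (hb : 2 ≤ b) :
    ∀ᶠ N : ℕ in Filter.atTop, ∀ q, q.Prime → q ≤ Nat.log b N / 4 →
      N / Real.log N / 8 * (q : ℝ)⁻¹ ≤ #(cofactorPrimes b N q) := by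
  obtain ⟨n₀, hn₀⟩ := Filter.eventually_atTop.1 eventually_half_le_primeCounting_mul_log
  filter_upwards [eventually_log_le_mul_rpow (c := 1 / 8) (s := 1 / 2) (by norm_num) (by norm_num),
    Filter.eventually_ge_atTop 1, Filter.eventually_ge_atTop (n₀ ^ 2)] with N hlog hN hNn₀ q hq hqN
  refine le_card_cofactorPrimes hb hq hqN ?_ (hn₀ _ ?_)
  · rw [Real.sqrt_eq_rpow]
    linarith
  · have hsqrt : (n₀ : ℝ) ≤ √N := Real.le_sqrt_of_sq_le (by exact_mod_cast hNn₀)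
    have hpow : (1 : ℝ) ≤ (b : ℝ) ^ q := one_le_pow₀ (by exact_mod_cast one_le_two.trans hb)
    have hqsqrt : (q : ℝ) ≤ √N :=
      (le_mul_of_one_le_left (Nat.cast_nonneg q) hpow).trans
        (pow_mul_self_le_sqrt hb (Nat.one_le_iff_ne_zero.1 hN) hqN)
    have hmul : (n₀ * q : ℝ) ≤ N := calc
      (n₀ * q : ℝ) ≤ √N * √N := by gcongr
      _ = N := Real.mul_self_sqrt (Nat.cast_nonneg N)
    exact (Nat.le_div_iff_mul_le hq.pos).2 (by exact_mod_cast hmul)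

lemma eventually_sqrt_log_le_natLog_div (hb : 2 ≤ b) :
    ∀ᶠ N : ℕ in Filter.atTop, √(Real.log N) ≤ (Nat.log b N / 4 : ℕ) := by
  have hlogb : 0 < Real.log b := Real.log_pos (by exact_mod_cast hb)
  have hsqrt := Real.tendsto_sqrt_atTop.comp
    (Real.tendsto_log_atTop.comp (tendsto_natCast_atTop_atTop (R := ℝ)))
  filter_upwards [hsqrt.eventually_ge_atTop (8 * Real.log b + 4)] with N hN
  simp only [Function.comp_apply] at hN
  have hsq : √(Real.log N) ^ 2 = Real.log N := Real.sq_sqrt (Real.log_natCast_nonneg N)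
  have hnatLog : Real.log N < (Nat.log b N + 1) * Real.log b := by
    rw [← div_lt_iff₀ hlogb, Real.log_div_log, ← Real.natFloor_logb_natCast]
    exact Nat.lt_floor_add_one _
  have hlarge : 8 * √(Real.log N) < Nat.log b N + 1 :=
    lt_of_mul_lt_mul_right (by nlinarith) hlogb.le
  have hdiv : (Nat.log b N : ℝ) ≤ 4 * (Nat.log b N / 4 : ℕ) + 3 := by
    exact_mod_cast (by lia : Nat.log b N ≤ 4 * (Nat.log b N / 4) + 3)
  linarith

lemma half_log_log_log_le {x y : ℝ} (hlog : 0 < Real.log x) (hx : 16 ≤ Real.log (Real.log x))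
    (hy : √(Real.log x) ≤ y) :
    Real.log (Real.log (Real.log x)) / 2 ≤ Real.log (Real.log y / 2) := by
  have hlogy : Real.log (Real.log x) / 2 ≤ Real.log y := by
    rw [← Real.log_sqrt hlog.le]
    exact Real.log_le_log (Real.sqrt_pos.2 hlog) hy
  rw [← Real.log_sqrt (by linarith)]
  refine Real.log_le_log (Real.sqrt_pos.2 (by linarith)) ?_
  rw [Real.sqrt_le_left (by linarith)]
  nlinarith

lemma eventually_le_card_setAN (hb : 2 ≤ b) :
    ∀ᶠ N : ℕ in Filter.atTop,
      N / Real.log N / 16 * Real.log (Real.log (Real.log N)) ≤ #(setAN b N) := by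
  have hlog := Real.tendsto_log_atTop.comp (tendsto_natCast_atTop_atTop (R := ℝ))
  filter_upwards [eventually_le_card_cofactorPrimes hb, eventually_sqrt_log_le_natLog_div hb,
    hlog.eventually_ge_atTop 4, (Real.tendsto_log_atTop.comp hlog).eventually_ge_atTop 16]
    with N hcofactor hsqrt hlog hloglog
  simp only [Function.comp_apply] at hlog hloglog
  set y := Nat.log b N / 4
  have hy : 2 ≤ y := by
    have : (2 : ℝ) ≤ √(Real.log N) := Real.le_sqrt_of_sq_le (by linarith)
    exact_mod_cast this.trans hsqrt
  have hsub : {q ∈ Icc 1 y | q.Prime} ⊆ smallPrimes N := fun q hq => by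
    obtain ⟨hq, hprime⟩ := mem_filter.1 hq
    exact mem_smallPrimes.2 ⟨(mem_Icc.1 hq).2.trans
      ((Nat.div_le_self _ _).trans (Nat.log_anti_left one_lt_two hb)), hprime⟩
  have : (0 : ℝ) ≤ N / Real.log N := by positivity
  rw [card_setAN hb, Nat.cast_sum]
  calc N / Real.log N / 16 * Real.log (Real.log (Real.log N))
      = N / Real.log N / 8 * (Real.log (Real.log (Real.log N)) / 2) := by ring
    _ ≤ N / Real.log N / 8 * ∑ q ∈ Icc 1 y with q.Prime, (q : ℝ)⁻¹ := by
        gcongr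
        exact (half_log_log_log_le (by linarith) hloglog hsqrt).trans
          (log_half_log_le_sum_inv_primes hy)
    _ ≤ ∑ q ∈ Icc 1 y with q.Prime, (#(cofactorPrimes b N q) : ℝ) := by
        rw [mul_sum]
        refine sum_le_sum fun q hq => ?_
        obtain ⟨hq, hprime⟩ := mem_filter.1 hq
        exact hcofactor q hprime (mem_Icc.1 hq).2
    _ ≤ _ := sum_le_sum_of_subset_of_nonneg hsub fun _ _ _ => Nat.cast_nonneg _

lemma eventually_exists_admissibleLevel :
    ∀ᶠ N : ℕ in Filter.atTop, ∃ R, AdmissibleLevel N R := by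
  have hroot := (tendsto_rpow_atTop (by norm_num : (0 : ℝ) < 1 / 20)).comp
    (tendsto_natCast_atTop_atTop (R := ℝ))
  filter_upwards [eventually_log_le_mul_rpow (c := 1 / 2) (s := 1 / 20) (by norm_num)
    (by norm_num), hroot.eventually_ge_atTop 4, Filter.eventually_ge_atTop 2] with N hlog h4 hN
  simp only [Function.comp_apply] at h4
  set x : ℝ := (N : ℝ) ^ (1 / 20 : ℝ)
  have hpow : x ^ 20 = N := by
    rw [← Real.rpow_natCast, ← Real.rpow_mul (Nat.cast_nonneg N)]
    norm_num
  have hlogN : 0 < Real.log N := Real.log_pos (by exact_mod_cast hN)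
  have hfloor : (⌊x⌋₊ : ℝ) ≤ x := Nat.floor_le (by linarith)
  have hsqrt : √x ≤ ⌊x⌋₊ := by
    refine le_trans ?_ (by linarith [Nat.lt_floor_add_one x] : x / 2 ≤ ⌊x⌋₊)
    rw [Real.sqrt_le_left (by linarith)]
    nlinarith
  have hnatLog : (Nat.log 2 N : ℝ) ≤ x := by
    have h := Real.natLog_le_logb N 2
    rw [Nat.cast_ofNat, ← Real.log_div_log, le_div_iff₀ (Real.log_pos one_lt_two)] at h
    nlinarith [Real.log_two_gt_d9, (Nat.log 2 N).cast_nonneg (α := ℝ)]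
  refine ⟨⌊x⌋₊, Nat.le_floor (by norm_num; linarith), Nat.log_pos one_lt_two hN, ?_, ?_⟩
  · have hlogR := Real.log_le_log (Real.sqrt_pos.2 (by linarith)) hsqrt
    rw [Real.log_sqrt (by linarith)] at hlogR
    rw [← hpow, Real.log_pow, Nat.cast_ofNat]
    linarith
  · rw [le_div_iff₀ hlogN]
    calc (⌊x⌋₊ : ℝ) ^ 8 * (Nat.log 2 N : ℝ) ^ 10 * Real.log N ≤ x ^ 8 * x ^ 10 * x := by
          gcongr
          linarith
      _ = x ^ 19 := by ring
      _ ≤ x ^ 20 := pow_le_pow_right₀ (by linarith) (by norm_num)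
      _ = N := hpow

end LowerBound

lemma AdmissibleLevel.abs_card_powModRatio_le_sub_le {b N R : ℕ} (h : AdmissibleLevel N R)
    (hb : 2 ≤ b) {r : ℝ} (hr : r ∈ Set.Ioc 0 1) :
    |(#{n ∈ setAN b N | powModRatio b n ≤ r} : ℝ) - r * #(setAN b N)| ≤
      (80 * orderSumBound + 82 * b + 663) * (N / Real.log N) := by
  have hsub : {q ∈ smallPrimes N | b < q} ⊆ smallPrimes N := filter_subset _ _
  have hlt : ∀ q ∈ {q ∈ smallPrimes N | b < q}, b < q := fun q hq => (mem_filter.1 hq).2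
  have hG (m : ℕ → ℕ) : |∑ q ∈ smallPrimes N with b < q,
      ∑ p ∈ cofactorPrimes b N q, thresholdTest q (m q) (crtDigit b q p)| ≤
        333 * (N / Real.log N) :=
    h.abs_sum_crtDigit_le hsub hlt (by lia) fun q hq =>
      isBalanced_thresholdTest (hb.trans (hlt q hq).le) (m q)
  linarith [_root_.abs_card_powModRatio_le_sub_le hb hr.1.le hr.2 hG,
    h.sum_two_div_mul_card_cofactorPrimes_le b hsub,
    h.sum_card_crtDigit_eq_zero_le hb hsub hlt, h.sum_card_cofactorPrimes_le b]

lemma starDiscOn_le_div {A : Finset ℕ} (hA : 0 < (#A : ℝ)) {f : ℕ → ℝ} {E : ℝ}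
    (hE : ∀ r ∈ Set.Ioc (0 : ℝ) 1, |(#{n ∈ A | f n ≤ r} : ℝ) - r * #A| ≤ E) :
    starDiscOn A f ≤ E / #A := by
  have : Nonempty (Set.Ioc (0 : ℝ) 1) := ⟨1, by norm_num⟩
  refine ciSup_le fun r => ?_
  rw [le_div_iff₀ hA, ← abs_of_pos hA, ← abs_mul, abs_of_pos hA, sub_mul, div_mul_cancel₀ _ hA.ne']
  convert hE r r.2 using 6

end PowModDiscrepancy

theorem stmt_17 (b : ℕ) (hb : 2 ≤ b) :
    ∃ C : ℝ, 0 < C ∧ ∃ N₀ : ℕ, ∀ N : ℕ, N₀ ≤ N →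
      starDiscOn (setAN b N) (fun n => ((b ^ n % n : ℕ) : ℝ) / n) ≤
        C / Real.log (Real.log (Real.log N)) := by
  set K : ℝ := 80 * orderSumBound + 82 * b + 663
  have hK : 0 < K := by positivity [orderSumBound_nonneg]
  have hlogloglog := Real.tendsto_log_atTop.comp (Real.tendsto_log_atTop.comp
    (Real.tendsto_log_atTop.comp (tendsto_natCast_atTop_atTop (R := ℝ))))
  obtain ⟨N₀, hN₀⟩ := Filter.eventually_atTop.1 <| (hlogloglog.eventually_gt_atTop 0).and <|
    (eventually_le_card_setAN hb).and eventually_exists_admissibleLevel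
  refine ⟨16 * K, by positivity, N₀, fun N hN => ?_⟩
  obtain ⟨hpos, hcard, R, hR⟩ := hN₀ N hN
  simp only [Function.comp_apply] at hpos
  have hscale := hR.scale_pos
  have hA : 0 < ((setAN b N).card : ℝ) := lt_of_lt_of_le (by positivity) hcard
  calc starDiscOn (setAN b N) (powModRatio b)
      ≤ K * (N / Real.log N) / (setAN b N).card :=
        starDiscOn_le_div hA fun r hr => hR.abs_card_powModRatio_le_sub_le hb hr
    _ ≤ 16 * K / Real.log (Real.log (Real.log N)) := by
        rw [div_le_div_iff₀ hA hpos]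
        linarith [mul_le_mul_of_nonneg_left hcard hK.le]
end
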